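/- Let n ≥ 2, m ≥ 1, and let Ω be a domain in ℝⁿ. Let 𝔘(Ω) be the set of m-component vector-valued functions u whose components are harmonic in Ω and which satisfy sup_Ω |u| ≤ 1. Suppose a point ξ ∈ ∂Ω can be touched by an interior ball B ⊂ Ω. Then limsup_{x→ξ} sup_{u∈𝔘(Ω)} max_{|ℓ|=1} |x−ξ| · |(ℓ, ∇)u(x)| ≤ C_n, where x ranges over points of the radius of B directed from the center of B to ξ, and C_n = 4(n−1)^{(n−1)/2} ω_{n−1} / (n^{n/2} ω_n). -/

import Mathlib

open MeasureTheory Real Filter Metric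
open scoped Real RealInnerProductSpace

noncomputable section

/-- `Eu n` is the Euclidean space `ℝⁿ`. -/
abbrev Eu (n : ℕ) := EuclideanSpace ℝ (Fin n)

/-- `ω_n`: the surface area of the unit sphere `S^{n-1}` in `ℝⁿ`,
given by the classical formula `2 π^{n/2} / Γ(n/2)`. -/
def sphereArea (n : ℕ) : ℝ := 2 * π ^ ((n : ℝ) / 2) / Real.Gamma ((n : ℝ) / 2)

/-- A function is harmonic on a set: it is twice continuously differentiable
there and its Laplacian (the sum of the pure second partial derivatives in the
coordinate directions) vanishes at every point of the set. -/
def IsHarmonicOn {n : ℕ} (u : Eu n → ℝ) (Ω : Set (Eu n)) : Prop :=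
  ContDiffOn ℝ 2 u Ω ∧ ∀ x ∈ Ω,
    ∑ i, fderiv ℝ (fun y => fderiv ℝ u y (EuclideanSpace.single i 1)) x
      (EuclideanSpace.single i 1) = 0

/-- The constant `C_n = 4 (n-1)^{(n-1)/2} ω_{n-1} / (n^{n/2} ω_n)`. -/
def Cconst (n : ℕ) : ℝ :=
  4 * ((n : ℝ) - 1) ^ (((n : ℝ) - 1) / 2) * sphereArea (n - 1) /
    ((n : ℝ) ^ ((n : ℝ) / 2) * sphereArea n)


section
open Set ENNReal

/-- Polar coordinates for lower integrals. -/
lemma polar_lintegral {n : ℕ} (hn : 1 ≤ n) (f : Eu n → ℝ≥0∞) (hf : Measurable f) :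
    ∫⁻ z, f z = ∫⁻ e : sphere (0 : Eu n) 1, (∫⁻ r in Ioi (0 : ℝ),
      ENNReal.ofReal (r ^ (n - 1)) * f (r • (e : Eu n))) ∂(volume : Measure (Eu n)).toSphere := by
  have : Nontrivial (Eu n) := by
    have : Nonempty (Fin n) := ⟨⟨0, hn⟩⟩
    infer_instance
  have hmp := (volume : Measure (Eu n)).measurePreserving_homeomorphUnitSphereProd
  have h0 : ∫⁻ z, f z = ∫⁻ x : ({(0 : Eu n)}ᶜ : Set (Eu n)), f x ∂((volume : Measure (Eu n)).comap Subtype.val) := by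
    rw [lintegral_subtype_comap (measurableSet_singleton _).compl f, restrict_compl_singleton]
  rw [h0]
  have h1 : ∀ x : ({(0 : Eu n)}ᶜ : Set (Eu n)), f x =
      (fun p : sphere (0 : Eu n) 1 × Ioi (0 : ℝ) => f ((p.2 : ℝ) • (p.1 : Eu n)))
        (homeomorphUnitSphereProd (Eu n) x) := by
    intro x
    have hx : ‖(x : Eu n)‖ ≠ 0 := norm_ne_zero_iff.2 x.2
    simp [smul_smul, hx]
  simp_rw [h1]
  have hm : Measurable (fun p : sphere (0 : Eu n) 1 × Ioi (0 : ℝ) => f ((p.2 : ℝ) • (p.1 : Eu n))) := by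
    apply hf.comp
    fun_prop
  rw [hmp.lintegral_comp hm, lintegral_prod _ hm.aemeasurable]
  congr 1
  ext e
  simp only [Measure.volumeIoiPow]
  rw [lintegral_withDensity_eq_lintegral_mul _ (by fun_prop) (by apply hf.comp; fun_prop)]
  simp only [Pi.mul_apply, finrank_euclideanSpace_fin]
  rw [lintegral_subtype_comap measurableSet_Ioi
    (fun r : ℝ => ENNReal.ofReal (r ^ (n - 1)) * f (r • (e : Eu n)))]

/-- Scaling of lower integrals on the line. -/
lemma lintegral_scale (g : ℝ → ℝ≥0∞) (hg : Measurable g) (p : ℝ) (hp : 0 < p) :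
    ∫⁻ r, ENNReal.ofReal p * g (p * r) = ∫⁻ s, g s := by
  rw [lintegral_const_mul _ (by fun_prop)]
  have := Real.smul_map_volume_mul_left hp.ne'
  conv_rhs => rw [← this]
  rw [lintegral_smul_measure, lintegral_map hg (by fun_prop), abs_of_pos hp]
  simp

/-- Integration in layers of a homogeneous function. -/
lemma layer_lintegral {n : ℕ} (hn : 1 ≤ n) (H : Eu n → ℝ≥0∞) (hH : Measurable H)
    (hom : ∀ c : ℝ, 0 < c → ∀ z, H (c • z) = H z) (w : ℝ → ℝ≥0∞) (hw : Measurable w)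
    (hw0 : ∀ s ≤ 0, w s = 0) (ν : Eu n) :
    ∫⁻ z, w (inner ℝ ν z) * (ENNReal.ofReal (‖z‖ ^ n)⁻¹ * H z) =
      (∫⁻ s, w s * ENNReal.ofReal s⁻¹) *
      ∫⁻ e : sphere (0 : Eu n) 1, {e : sphere (0 : Eu n) 1 | 0 < inner ℝ ν (e : Eu n)}.indicator
        (fun e => H e) e ∂(volume : Measure (Eu n)).toSphere := by
  have hms : MeasurableSet {e : sphere (0 : Eu n) 1 | 0 < inner ℝ ν (e : Eu n)} :=
    measurableSet_lt measurable_const (by fun_prop)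
  rw [polar_lintegral hn _ (by fun_prop), ← lintegral_const_mul _ ((by fun_prop : Measurable
    (fun e : sphere (0 : Eu n) 1 => H e)).indicator hms)]
  congr 1
  ext e
  by_cases he : 0 < inner ℝ ν (e : Eu n)
  · rw [indicator_of_mem (by exact he)]
    rw [← lintegral_scale (fun s => w s * ENNReal.ofReal s⁻¹) (by fun_prop) _ he,
      ← lintegral_mul_const _ (by fun_prop), ← lintegral_indicator measurableSet_Ioi]
    congr 1
    ext r
    by_cases hr : 0 < r
    · rw [indicator_of_mem (by exact hr), hom r hr, inner_smul_right, norm_smul]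
      have h1 : ‖(e : Eu n)‖ = 1 := by simp
      rw [h1, mul_one, Real.norm_of_nonneg hr.le, mul_comm r]
      have h2 : ENNReal.ofReal (r ^ (n - 1)) * ENNReal.ofReal (r ^ n)⁻¹ =
          ENNReal.ofReal (inner ℝ ν (e : Eu n)) * ENNReal.ofReal (inner ℝ ν (e : Eu n) * r)⁻¹ := by
        rw [← ENNReal.ofReal_mul (by positivity), ← ENNReal.ofReal_mul (by positivity)]
        congr 1
        obtain ⟨k, rfl⟩ : ∃ k, n = k + 1 := ⟨n - 1, by omega⟩
        simp only [Nat.add_sub_cancel]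
        have := he.ne'
        field_simp
        ring
      calc _ = (ENNReal.ofReal (r ^ (n - 1)) * ENNReal.ofReal (r ^ n)⁻¹) *
              (w (inner ℝ ν (e : Eu n) * r) * H e) := by ring
        _ = _ := by rw [h2]; ring
    · rw [indicator_of_notMem (by exact hr), hw0 _ (by
        push Not at hr; exact mul_nonpos_of_nonneg_of_nonpos he.le hr)]
      simp
  · rw [indicator_of_notMem (by exact he)]
    simp only [mul_zero]
    rw [setLIntegral_congr_fun (g := fun _ => 0) measurableSet_Ioi]
    · simp
    · intro r hr
      simp only
      rw [inner_smul_right, hw0 _ (mul_nonpos_of_nonneg_of_nonpos (le_of_lt hr) (not_lt.1 he))]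
      simp

/-- The spherical integral as an integral over the ball. -/
lemma ball_lintegral {n : ℕ} (hn : 1 ≤ n) (H : Eu n → ℝ≥0∞) (hH : Measurable H)
    (hom : ∀ c : ℝ, 0 < c → ∀ z, H (c • z) = H z) :
    (n : ℝ≥0∞) * ∫⁻ z in ball (0 : Eu n) 1, H z =
      ∫⁻ e : sphere (0 : Eu n) 1, H e ∂(volume : Measure (Eu n)).toSphere := by
  have key : ∀ H : Eu n → ℝ≥0∞, Measurable H → (∀ c : ℝ, 0 < c → ∀ z, H (c • z) = H z) →
      ∫⁻ z in ball (0 : Eu n) 1, H z = (∫⁻ r in Ioi (0 : ℝ), (Iio (1 : ℝ)).indicator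
        (fun r => ENNReal.ofReal (r ^ (n - 1))) r) *
        ∫⁻ e : sphere (0 : Eu n) 1, H e ∂(volume : Measure (Eu n)).toSphere := by
    intro H hH hom
    rw [← lintegral_indicator measurableSet_ball, polar_lintegral hn _
      (hH.indicator measurableSet_ball), ← lintegral_const_mul _ (by fun_prop)]
    congr 1
    ext e
    rw [← lintegral_mul_const _ ((by fun_prop : Measurable _).indicator measurableSet_Iio)]
    apply setLIntegral_congr_fun measurableSet_Ioi
    intro r hr
    have hr : 0 < r := hr
    have h1 : ‖(e : Eu n)‖ = 1 := by simp
    by_cases h : r < 1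
    · simp only
      rw [indicator_of_mem (by simp [norm_smul, abs_of_pos hr, h]), indicator_of_mem (by exact h),
        hom r hr]
    · simp only
      rw [indicator_of_notMem (by simp [norm_smul, abs_of_pos hr]; linarith),
        indicator_of_notMem (by exact h)]
      simp
  have h1 := key (fun _ => 1) measurable_const (by simp)
  simp only [lintegral_one, Measure.restrict_apply MeasurableSet.univ, univ_inter,
    Measure.toSphere_apply_univ, finrank_euclideanSpace_fin] at h1
  have hb0 : volume (ball (0 : Eu n) 1) ≠ 0 := (measure_ball_pos _ _ one_pos).ne'
  have hbt : volume (ball (0 : Eu n) 1) ≠ ∞ := measure_ball_lt_top.ne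
  rw [key H hH hom, ← mul_assoc]
  set I := ∫⁻ r in Ioi (0 : ℝ), (Iio (1 : ℝ)).indicator
        (fun r => ENNReal.ofReal (r ^ (n - 1))) r
  have h2 : (n : ℝ≥0∞) * I = 1 := by
    have : 1 * volume (ball (0 : Eu n) 1) = (n * I) * volume (ball (0 : Eu n) 1) := by
      rw [one_mul]
      conv_lhs => rw [h1]
      ring
    exact ((ENNReal.mul_left_inj hb0 hbt).1 this).symm
  rw [h2, one_mul]

end

section
open Set ENNReal

/-- The integral over the unit sphere. -/
def sphI {n : ℕ} (H : Eu n → ℝ≥0∞) : ℝ≥0∞ :=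
  ∫⁻ e : sphere (0 : Eu n) 1, H e ∂(volume : Measure (Eu n)).toSphere

/-- The restriction of a function to an open half-space. -/
def halfF {n : ℕ} (ν : Eu n) (H : Eu n → ℝ≥0∞) : Eu n → ℝ≥0∞ :=
  {z : Eu n | 0 < inner ℝ ν z}.indicator H

/-- Positively homogeneous of degree zero. -/
def Hom0 {n : ℕ} (H : Eu n → ℝ≥0∞) : Prop := ∀ c : ℝ, 0 < c → ∀ z, H (c • z) = H z

lemma measurableSet_half {n : ℕ} (ν : Eu n) : MeasurableSet {z : Eu n | 0 < inner ℝ ν z} :=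
  measurableSet_lt measurable_const (by fun_prop)

lemma halfF_meas {n : ℕ} (ν : Eu n) (H : Eu n → ℝ≥0∞) (hH : Measurable H) :
    Measurable (halfF ν H) := hH.indicator (measurableSet_half ν)

lemma halfF_hom {n : ℕ} (ν : Eu n) (H : Eu n → ℝ≥0∞) (hH : Hom0 H) : Hom0 (halfF ν H) := by
  intro c hc z
  unfold halfF
  by_cases h : 0 < inner ℝ ν z
  · rw [indicator_of_mem (by simpa [inner_smul_right, hc] using h), indicator_of_mem (by exact h),
      hH c hc]
  · rw [indicator_of_notMem (by simpa [inner_smul_right, hc] using h),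
      indicator_of_notMem (by exact h)]

lemma sphI_rot {n : ℕ} (hn : 1 ≤ n) (H : Eu n → ℝ≥0∞) (hH : Measurable H) (hom : Hom0 H)
    (T : Eu n ≃ₗᵢ[ℝ] Eu n) : sphI (fun z => H (T z)) = sphI H := by
  unfold sphI
  have hT : Measurable (fun z => H (T z)) := hH.comp T.continuous.measurable
  rw [← ball_lintegral hn H hH hom, ← ball_lintegral hn (fun z => H (T z)) hT
    (fun c hc z => by simp only [map_smul]; exact hom c hc _)]
  congr 1
  have h := T.measurePreserving
  rw [← lintegral_indicator measurableSet_ball, ← lintegral_indicator measurableSet_ball,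
    ← h.lintegral_comp (hH.indicator measurableSet_ball)]
  congr 1
  ext z
  simp only [indicator, mem_ball_zero_iff, LinearIsometryEquiv.norm_map]

lemma sphI_congr_ae {n : ℕ} (hn : 1 ≤ n) (H G : Eu n → ℝ≥0∞) (hH : Measurable H) (hom : Hom0 H)
    (hG : Measurable G) (homG : Hom0 G) (h : H =ᵐ[volume] G) : sphI H = sphI G := by
  unfold sphI
  rw [← ball_lintegral hn H hH hom, ← ball_lintegral hn G hG homG]
  congr 1
  exact lintegral_congr_ae (ae_restrict_of_ae h)

lemma ae_inner_ne {n : ℕ} (ν : Eu n) (hν : ν ≠ 0) :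
    ∀ᵐ z : Eu n, inner ℝ ν z ≠ 0 := by
  have : (volume : Measure (Eu n)) ((ℝ ∙ ν)ᗮ : Submodule ℝ (Eu n)) = 0 := by
    apply Measure.addHaar_submodule
    intro h
    have : ν ∈ (ℝ ∙ ν)ᗮ := by rw [h]; trivial
    rw [Submodule.mem_orthogonal_singleton_iff_inner_right] at this
    exact hν (inner_self_eq_zero.1 this)
  rw [ae_iff]
  convert this using 2
  ext z
  simp [Submodule.mem_orthogonal_singleton_iff_inner_right]

lemma sphI_half {n : ℕ} (hn : 1 ≤ n) (H : Eu n → ℝ≥0∞) (hH : Measurable H) (hom : Hom0 H)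
    (hev : ∀ z, H (-z) = H z) (ν : Eu n) (hν : ν ≠ 0) :
    2 * sphI (halfF ν H) = sphI H := by
  have h1 : sphI (halfF ν H) = sphI (halfF (-ν) H) := by
    rw [← sphI_rot hn (halfF ν H) (halfF_meas ν H hH) (halfF_hom ν H hom)
      (LinearIsometryEquiv.neg ℝ)]
    congr 1
    ext z
    simp [halfF, indicator, hev]
  have h2 : sphI (halfF ν H) + sphI (halfF (-ν) H) = sphI (halfF ν H + halfF (-ν) H) := by
    unfold sphI
    rw [← lintegral_add_left]
    · rfl
    · exact (halfF_meas ν H hH).comp measurable_subtype_coe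
  rw [two_mul]
  nth_rw 2 [h1]
  rw [h2]
  apply sphI_congr_ae hn _ _ ((halfF_meas ν H hH).add (halfF_meas _ H hH)) _ hH hom
  · filter_upwards [ae_inner_ne ν hν] with z hz
    simp only [Pi.add_apply, halfF, indicator, mem_ofPred_eq, inner_neg_left]
    rcases lt_or_gt_of_ne hz with h | h
    · rw [if_neg (by linarith), if_pos (by linarith), zero_add]
    · rw [if_pos (by linarith), if_neg (by linarith), add_zero]
  · intro c hc z
    simp only [Pi.add_apply]
    rw [halfF_hom ν H hom c hc, halfF_hom (-ν) H hom c hc]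

/-- The quadratic kernel. -/
def Hq {n : ℕ} (p : Eu n) (z : Eu n) : ℝ≥0∞ :=
  ENNReal.ofReal |‖p‖ ^ 2 - n * (inner ℝ p z) ^ 2 / ‖z‖ ^ 2|

/-- The kernel of the half-space. -/
def Ha {n : ℕ} (l ν : Eu n) (z : Eu n) : ℝ≥0∞ :=
  ENNReal.ofReal |inner ℝ l ν - n * (inner ℝ l z * inner ℝ ν z) / ‖z‖ ^ 2|

lemma Hq_meas {n : ℕ} (p : Eu n) : Measurable (Hq p) := by unfold Hq; fun_prop
lemma Ha_meas {n : ℕ} (l ν : Eu n) : Measurable (Ha l ν) := by unfold Ha; fun_prop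

lemma Hq_hom {n : ℕ} (p : Eu n) : Hom0 (Hq p) := by
  intro c hc z
  unfold Hq
  rw [inner_smul_right, norm_smul, Real.norm_of_nonneg hc.le]
  congr 3
  rw [mul_pow, mul_pow, mul_left_comm, mul_div_mul_left _ _ (by positivity)]

lemma Ha_hom {n : ℕ} (l ν : Eu n) : Hom0 (Ha l ν) := by
  intro c hc z
  unfold Ha
  rw [inner_smul_right, inner_smul_right, norm_smul, Real.norm_of_nonneg hc.le]
  congr 3
  rw [mul_pow, show (n : ℝ) * (c * inner ℝ l z * (c * inner ℝ ν z)) =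
    c ^ 2 * (n * (inner ℝ l z * inner ℝ ν z)) by ring, mul_div_mul_left _ _ (by positivity)]

lemma sphI_Hq {n : ℕ} (hn : 1 ≤ n) (b p : Eu n) (hb : ‖b‖ = 1) :
    sphI (Hq p) = ENNReal.ofReal (‖p‖ ^ 2) * sphI (Hq b) := by
  by_cases hp : p = 0
  · subst hp
    simp [sphI, Hq]
  have hp' : 0 < ‖p‖ := norm_pos_iff.2 hp
  have h1 : ‖‖p‖⁻¹ • p‖ = ‖b‖ := by rw [norm_smul, hb]; simp [hp]
  set T := (ℝ ∙ (‖p‖⁻¹ • p - b))ᗮ.reflection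
  have hT : T (‖p‖⁻¹ • p) = b := Submodule.reflection_sub h1
  have hT2 : p = ‖p‖ • T b := by
    rw [← hT, Submodule.reflection_reflection, smul_smul, mul_inv_cancel₀ hp'.ne', one_smul]
  rw [← sphI_rot hn (Hq b) (Hq_meas b) (Hq_hom b) T]
  unfold sphI
  have hm : Measurable (fun e : sphere (0 : Eu n) 1 => (fun z => Hq b (T z)) (e : Eu n)) :=
    ((Hq_meas b).comp T.continuous.measurable).comp measurable_subtype_coe
  rw [← lintegral_const_mul _ hm]
  congr 1
  ext e
  unfold Hq
  rw [← ENNReal.ofReal_mul (by positivity), hb, T.norm_map]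
  congr 1
  have h3 : inner ℝ p (e : Eu n) = ‖p‖ * inner ℝ b (T e) := by
    conv_lhs => rw [hT2]
    rw [inner_smul_left]
    simp only [conj_trivial]
    congr 1
    rw [← T.inner_map_map, Submodule.reflection_reflection]
  rw [h3]
  nth_rw 2 [← abs_of_nonneg (sq_nonneg ‖p‖)]
  rw [← abs_mul]
  congr 1
  ring

lemma sphI_Ha_le {n : ℕ} (hn : 1 ≤ n) (b l ν : Eu n) (hb : ‖b‖ = 1) (hl : ‖l‖ = 1) (hν : ‖ν‖ = 1) :
    sphI (Ha l ν) ≤ sphI (Hq b) := by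
  have h1 : ∀ z, Ha l ν z ≤ ENNReal.ofReal (1/4) * Hq (l + ν) z + ENNReal.ofReal (1/4) * Hq (l - ν) z := by
    intro z
    unfold Ha Hq
    rw [← ENNReal.ofReal_mul (by norm_num), ← ENNReal.ofReal_mul (by norm_num),
      ← ENNReal.ofReal_add (by positivity) (by positivity)]
    apply ENNReal.ofReal_le_ofReal
    have e : inner ℝ l ν - n * (inner ℝ l z * inner ℝ ν z) / ‖z‖ ^ 2 =
      1/4 * (‖l + ν‖^2 - n * (inner ℝ (l + ν) z) ^ 2 / ‖z‖ ^ 2) -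
      1/4 * (‖l - ν‖^2 - n * (inner ℝ (l - ν) z) ^ 2 / ‖z‖ ^ 2) := by
      rw [norm_add_sq_real, norm_sub_sq_real, inner_add_left, inner_sub_left]
      ring
    rw [e]
    refine (abs_sub _ _).trans ?_
    rw [abs_mul, abs_mul]
    norm_num
  calc sphI (Ha l ν) ≤ ∫⁻ e : sphere (0 : Eu n) 1, (ENNReal.ofReal (1/4) * Hq (l + ν) e +
        ENNReal.ofReal (1/4) * Hq (l - ν) e) ∂(volume : Measure (Eu n)).toSphere :=
        lintegral_mono fun e => h1 e
    _ = ENNReal.ofReal (1/4) * sphI (Hq (l + ν)) + ENNReal.ofReal (1/4) * sphI (Hq (l - ν)) := by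
        have m1 : Measurable (fun e : sphere (0 : Eu n) 1 => Hq (l + ν) (e : Eu n)) :=
          (Hq_meas (l + ν)).comp measurable_subtype_coe
        have m2 : Measurable (fun e : sphere (0 : Eu n) 1 => Hq (l - ν) (e : Eu n)) :=
          (Hq_meas (l - ν)).comp measurable_subtype_coe
        rw [lintegral_add_left (m1.const_mul _), lintegral_const_mul _ m1, lintegral_const_mul _ m2]
        rfl
    _ = sphI (Hq b) := by
        rw [sphI_Hq hn b _ hb, sphI_Hq hn b (l - ν) hb, ← mul_assoc, ← mul_assoc, ← add_mul,
          ← ENNReal.ofReal_mul (by norm_num), ← ENNReal.ofReal_mul (by norm_num),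
          ← ENNReal.ofReal_add (by positivity) (by positivity), norm_add_sq_real, norm_sub_sq_real,
          hl, hν]
        ring_nf
        simp

end

section
open Set ENNReal Topology

/-- The embedding `(t, y) ↦ t e₀ + y`. -/
def consE {k : ℕ} (t : ℝ) (y : Eu k) : Eu (k + 1) := WithLp.toLp 2 (Fin.cons t y.ofLp : Fin (k + 1) → ℝ)

lemma consE_zero {k : ℕ} (t : ℝ) (y : Eu k) : (consE t y) 0 = t := by simp [consE]

lemma consE_norm {k : ℕ} (t : ℝ) (y : Eu k) : ‖consE t y‖ ^ 2 = t ^ 2 + ‖y‖ ^ 2 := by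
  rw [EuclideanSpace.norm_sq_eq, EuclideanSpace.norm_sq_eq, Fin.sum_univ_succ]
  simp [consE]

lemma slice_lintegral {k : ℕ} (F : Eu (k + 1) → ℝ≥0∞) (hF : Measurable F) :
    ∫⁻ z, F z = ∫⁻ t : ℝ, ∫⁻ y : Eu k, F (consE t y) := by
  have h1 := (PiLp.volume_preserving_toLp (Fin (k + 1)))
  have h2 := (volume_preserving_piFinSuccAbove (fun _ : Fin (k + 1) => ℝ) 0).symm
  have h3 := (PiLp.volume_preserving_ofLp (Fin k))
  rw [← h1.lintegral_comp hF]
  refine (h2.lintegral_comp (hF.comp h1.measurable)).symm.trans ?_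
  rw [Measure.volume_eq_prod]
  refine (lintegral_prod _ ((hF.comp h1.measurable).comp h2.measurable).aemeasurable).trans ?_
  congr 1
  ext t
  refine (h3.lintegral_comp (((hF.comp h1.measurable).comp h2.measurable).comp
    (measurable_prodMk_left (x := t)))).symm.trans ?_
  congr 1
  ext y
  simp only [Function.comp, consE]
  congr 2
  ext i
  simp [MeasurableEquiv.piFinSuccAbove]

lemma lintegral_scaleE {k : ℕ} (g : Eu k → ℝ≥0∞) (hg : Measurable g) (p : ℝ) (hp : 0 < p) :
    ∫⁻ y, g y = ENNReal.ofReal (p ^ k) * ∫⁻ y, g (p • y) := by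
  have := Measure.map_addHaar_smul (volume : Measure (Eu k)) hp.ne'
  have h2 : ∫⁻ y, g (p • y) = ENNReal.ofReal (p ^ k)⁻¹ * ∫⁻ y, g y := by
    rw [← lintegral_map hg (by fun_prop : Measurable (fun y : Eu k => p • y)), this,
      lintegral_smul_measure]
    simp [abs_of_pos hp]
  rw [h2, ← mul_assoc, ← ENNReal.ofReal_mul (by positivity), mul_inv_cancel₀ (by positivity)]
  simp

lemma sphereArea_eq {k : ℕ} (hk : 1 ≤ k) :
    (k : ℝ≥0∞) * volume (ball (0 : Eu k) 1) = ENNReal.ofReal (sphereArea k) := by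
  have : Nonempty (Fin k) := ⟨⟨0, hk⟩⟩
  rw [EuclideanSpace.volume_ball, sphereArea, ← ENNReal.ofReal_natCast]
  simp only [ENNReal.ofReal_one, one_pow, one_mul, Fintype.card_fin]
  rw [← ENNReal.ofReal_mul (by positivity)]
  congr 1
  have hk' : (0 : ℝ) < k := by exact_mod_cast hk
  rw [Real.Gamma_add_one (by positivity), Real.sqrt_eq_rpow, ← Real.rpow_natCast, ← Real.rpow_mul pi_pos.le]
  have := (Real.Gamma_pos_of_pos (show (0 : ℝ) < k / 2 by positivity)).ne'
  rw [show (1 / 2 * (k : ℝ)) = k / 2 by ring]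
  field_simp

lemma sphere_one {k : ℕ} (hk : 1 ≤ k) : (volume : Measure (Eu k)).toSphere univ = ENNReal.ofReal (sphereArea k) := by
  have := ball_lintegral hk (fun _ => 1) measurable_const (fun _ _ _ => rfl)
  rw [← sphereArea_eq hk]
  simp only [lintegral_const, Measure.restrict_apply MeasurableSet.univ, univ_inter, one_mul] at this
  exact this.symm

lemma sphereArea_pos {k : ℕ} (hk : 1 ≤ k) : 0 < sphereArea k := by
  have hk' : (0 : ℝ) < k := by exact_mod_cast hk
  have := (Real.Gamma_pos_of_pos (show (0 : ℝ) < k / 2 by positivity))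
  unfold sphereArea
  positivity

/-- The antiderivative used for the constant. -/
def Fant (k : ℕ) (s : ℝ) : ℝ := s ^ k / √(1 + s ^ 2) ^ (k + 1)

lemma Fant_deriv (k : ℕ) (hk : 1 ≤ k) (s : ℝ) :
    HasDerivAt (Fant k) (s ^ (k - 1) / √(1 + s ^ 2) ^ (k + 3) * (k - s ^ 2)) s := by
  have h0 : (0 : ℝ) < 1 + s ^ 2 := by positivity
  have hq : HasDerivAt (fun s : ℝ => √(1 + s ^ 2)) (s / √(1 + s ^ 2)) s := by
    have := ((hasDerivAt_pow 2 s).const_add 1).sqrt h0.ne'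
    convert this using 1
    field_simp
    push_cast
    ring
  have := (hasDerivAt_pow k s).div (hq.pow (k + 1)) (by simp only [Pi.pow_apply]; positivity)
  refine HasDerivAt.congr_deriv (f := Fant k) this ?_
  obtain ⟨j, rfl⟩ : ∃ j, k = j + 1 := ⟨k - 1, by omega⟩
  have hs : √(1 + s ^ 2) ^ 2 = 1 + s ^ 2 := Real.sq_sqrt h0.le
  have hp : 0 < √(1 + s ^ 2) := by positivity
  set q := √(1 + s ^ 2)
  have hs2 : s ^ 2 = q ^ 2 - 1 := by linarith
  simp only [Nat.add_sub_cancel, Pi.pow_apply]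
  have e : q ^ (j + 1) * (s / q) = q ^ j * s := by field_simp; ring
  symm
  change s ^ j / q ^ (j + 1 + 3) * (((j + 1 : ℕ) : ℝ) - s ^ 2) = (((j + 1 : ℕ) : ℝ) * s ^ j * q ^ (j + 1 + 1) -
    s ^ (j + 1) * (((j + 1 + 1 : ℕ) : ℝ) * q ^ (j + 1) * (s / q))) / (q ^ (j + 1 + 1)) ^ 2
  rw [mul_assoc _ (q ^ (j + 1)), e, div_mul_eq_mul_div, div_eq_div_iff (by positivity) (by positivity)]
  push_cast
  linear_combination (-((j : ℝ) + 1) * s ^ j * q ^ (2 * j + 4)) * hs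

lemma Fant_lintegral (k : ℕ) (hk : 1 ≤ k) :
    ∫⁻ s in Ioi (0 : ℝ), ENNReal.ofReal |s ^ (k - 1) / √(1 + s ^ 2) ^ (k + 3) * (k - s ^ 2)| =
      ENNReal.ofReal (2 * Fant k √k) := by
  have hk' : (0 : ℝ) < √k := by apply Real.sqrt_pos.2; exact_mod_cast hk
  have hkk : √(k : ℝ) ^ 2 = k := Real.sq_sqrt (by positivity)
  rw [← Ioc_union_Ioi_eq_Ioi hk'.le, lintegral_union measurableSet_Ioi
    (by rw [Set.disjoint_left]; intro x hx; simp; exact hx.2)]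
  set g : ℝ → ℝ := fun s => s ^ (k - 1) / √(1 + s ^ 2) ^ (k + 3) * (k - s ^ 2) with hg
  have hgc : Continuous g := by
    have : ∀ s : ℝ, √(1 + s ^ 2) ^ (k + 3) ≠ 0 := by intro s; positivity
    fun_prop (disch := assumption)
  have hd : ∀ x, HasDerivAt (Fant k) (g x) x := Fant_deriv k hk
  have hpos : ∀ s ∈ Ioc 0 √(k:ℝ), 0 ≤ g s := by
    intro s hs
    have : s ^ 2 ≤ k := by rw [← hkk]; exact pow_le_pow_left₀ hs.1.le hs.2 2
    have h1 := hs.1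
    have h2 : (0 : ℝ) ≤ k - s ^ 2 := by linarith
    simp only [hg]
    positivity
  have hneg : ∀ s ∈ Ioi √(k:ℝ), g s ≤ 0 := by
    intro s hs
    have h1 : 0 < s := hk'.trans hs
    have : (k : ℝ) ≤ s ^ 2 := by rw [← hkk]; exact pow_le_pow_left₀ hk'.le (le_of_lt hs) 2
    simp only [hg]
    apply mul_nonpos_of_nonneg_of_nonpos (by positivity) (by linarith)
  have hlim : Tendsto (Fant k) atTop (𝓝 0) := by
    apply squeeze_zero' (g := fun s : ℝ => s⁻¹)
    · filter_upwards [eventually_gt_atTop 0] with s hs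
      unfold Fant; positivity
    · filter_upwards [eventually_gt_atTop 0] with s hs
      unfold Fant
      have : s ≤ √(1 + s ^ 2) := by apply Real.le_sqrt_of_sq_le; linarith
      rw [div_le_iff₀ (by positivity)]
      calc s ^ k = s⁻¹ * s ^ (k + 1) := by field_simp; ring
        _ ≤ _ := by gcongr
    · exact tendsto_inv_atTop_zero
  have e1 : ∫⁻ s in Ioc 0 √(k:ℝ), ENNReal.ofReal |g s| = ENNReal.ofReal (Fant k √k) := by
    rw [setLIntegral_congr_fun measurableSet_Ioc (g := fun s => ENNReal.ofReal (g s))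
      (fun s hs => by simp only [abs_of_nonneg (hpos s hs)])]
    rw [← ofReal_integral_eq_lintegral_ofReal (hgc.integrableOn_Ioc)
      ((ae_restrict_iff' measurableSet_Ioc).2 (ae_of_all _ hpos))]
    rw [← intervalIntegral.integral_of_le hk'.le,
      intervalIntegral.integral_eq_sub_of_hasDerivAt (fun x _ => hd x) (hgc.intervalIntegrable _ _)]
    have : Fant k 0 = 0 := by unfold Fant; rw [zero_pow (by omega)]; simp
    rw [this, sub_zero]
  have e2 : ∫⁻ s in Ioi √(k:ℝ), ENNReal.ofReal |g s| = ENNReal.ofReal (Fant k √k) := by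
    rw [setLIntegral_congr_fun measurableSet_Ioi (g := fun s => ENNReal.ofReal (- g s))
      (fun s hs => by simp only [abs_of_nonpos (hneg s hs)])]
    rw [← ofReal_integral_eq_lintegral_ofReal (f := fun s => - g s)
      ((integrableOn_Ioi_deriv_of_nonpos' (fun x _ => hd x) hneg hlim).neg)
      ((ae_restrict_iff' measurableSet_Ioi).2 (ae_of_all _ (fun s hs => by simpa using hneg s hs)))]
    rw [integral_neg, integral_Ioi_of_hasDerivAt_of_nonpos' (fun x _ => hd x) hneg hlim]
    simp
  rw [e1, e2, ← ENNReal.ofReal_add, two_mul] <;> (unfold Fant; positivity)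

lemma Fant_val (k : ℕ) (hk : 1 ≤ k) :
    Fant k √k = (k : ℝ) ^ ((k : ℝ) / 2) / ((k : ℝ) + 1) ^ (((k : ℝ) + 1) / 2) := by
  have h0 : (0 : ℝ) ≤ k := by positivity
  unfold Fant
  rw [Real.sq_sqrt h0, add_comm 1 (k : ℝ)]
  congr 1
  · rw [Real.sqrt_eq_rpow, ← Real.rpow_natCast, ← Real.rpow_mul h0]; congr 1; ring
  · rw [Real.sqrt_eq_rpow, ← Real.rpow_natCast, ← Real.rpow_mul (by positivity)]; congr 1; push_cast; ring

lemma J_val (k : ℕ) (hk : 1 ≤ k) :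
    ∫⁻ y : Eu k, ENNReal.ofReal ((√(1 + ‖y‖ ^ 2) ^ (k + 1))⁻¹) *
      ENNReal.ofReal |1 - ((k : ℝ) + 1) / (1 + ‖y‖ ^ 2)| =
      ENNReal.ofReal (sphereArea k) * ENNReal.ofReal (2 * Fant k √k) := by
  rw [polar_lintegral hk _ (by fun_prop), ← Fant_lintegral k hk, ← sphere_one hk]
  rw [mul_comm, ← lintegral_const]
  congr 1
  ext e
  apply setLIntegral_congr_fun measurableSet_Ioi
  intro r hr
  have hr : 0 < r := hr
  have : ‖r • (e : Eu k)‖ = r := by rw [norm_smul]; simp [hr.le]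
  simp only [this]
  have h0 : (0 : ℝ) < 1 + r ^ 2 := by positivity
  rw [← ENNReal.ofReal_mul (by positivity), ← ENNReal.ofReal_mul (by positivity), abs_mul,
    abs_of_nonneg (by positivity : 0 ≤ r ^ (k - 1) / √(1 + r ^ 2) ^ (k + 3))]
  congr 1
  have hs : √(1 + r ^ 2) ^ 2 = 1 + r ^ 2 := Real.sq_sqrt h0.le
  rw [show 1 - ((k : ℝ) + 1) / (1 + r ^ 2) = - (k - r ^ 2) / (1 + r ^ 2) by field_simp; ring]
  rw [abs_div, abs_neg, abs_of_pos h0, pow_add _ (k) 3, pow_add _ k 1, show (3 : ℕ) = 2 + 1 by rfl,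
    pow_add _ 2 1, hs]
  field_simp

lemma sphI_Hq_val {n : ℕ} (hn : 2 ≤ n) (p : Eu n) (hp : ‖p‖ = 1) :
    sphI (Hq p) = ENNReal.ofReal (Cconst n * sphereArea n) := by
  obtain ⟨k, rfl⟩ : ∃ k, n = k + 1 := ⟨n - 1, by omega⟩
  have hk : 1 ≤ k := by omega
  set b : Eu (k + 1) := EuclideanSpace.single 0 1 with hb
  have hb1 : ‖b‖ = 1 := by simp [b]
  have hbi : ∀ z : Eu (k + 1), inner ℝ b z = z 0 := by
    intro z; simp [b, EuclideanSpace.inner_single_left]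
  rw [sphI_Hq (by omega) b p hb1, hp]
  simp only [one_pow, ENNReal.ofReal_one, one_mul]
  have hhalf := sphI_half (n := k + 1) (by omega) (Hq b) (Hq_meas b) (Hq_hom b)
    (fun z => by simp [Hq]) b (by rw [← norm_ne_zero_iff, hb1]; simp)
  rw [← hhalf]
  set w : ℝ → ℝ≥0∞ := (Ioc (1 : ℝ) 2).indicator (fun _ => 1) with hw
  have hwm : Measurable w := measurable_const.indicator measurableSet_Ioc
  have hlay := layer_lintegral (n := k + 1) (by omega) (Hq b) (Hq_meas b) (Hq_hom b) w hwm
    (fun s hs => by rw [hw, indicator_of_notMem]; intro h; linarith [h.1]) b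
  have hI : (∫⁻ s, w s * ENNReal.ofReal s⁻¹) ≠ 0 ∧ (∫⁻ s, w s * ENNReal.ofReal s⁻¹) ≠ ⊤ := by
    have : (∫⁻ s, w s * ENNReal.ofReal s⁻¹) = ∫⁻ s in Ioc (1 : ℝ) 2, ENNReal.ofReal s⁻¹ := by
      rw [← lintegral_indicator measurableSet_Ioc]
      congr 1; ext s
      by_cases h : s ∈ Ioc (1 : ℝ) 2 <;> simp [hw, h]
    rw [this]
    constructor
    · have : ENNReal.ofReal 2⁻¹ ≤ ∫⁻ s in Ioc (1 : ℝ) 2, ENNReal.ofReal s⁻¹ := by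
        calc ENNReal.ofReal 2⁻¹ = ∫⁻ s in Ioc (1 : ℝ) 2, ENNReal.ofReal 2⁻¹ := by
              simp; norm_num
          _ ≤ _ := by
            apply setLIntegral_mono' measurableSet_Ioc
            intro s hs
            have := hs.1
            apply ENNReal.ofReal_le_ofReal
            apply inv_anti₀ (by linarith) hs.2
      intro h
      rw [h] at this
      simp at this
    · apply ne_top_of_le_ne_top (b := ∫⁻ s in Ioc (1 : ℝ) 2, 1) (by simp)
      apply setLIntegral_mono' measurableSet_Ioc
      intro s hs
      rw [ENNReal.ofReal_le_one]
      exact inv_le_one_of_one_le₀ hs.1.le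
  have hs2 : sphI (halfF b (Hq b)) = ENNReal.ofReal (sphereArea k) * ENNReal.ofReal (2 * Fant k √k) := by
    rw [← ENNReal.mul_right_inj hI.1 hI.2, ← J_val k hk]
    refine Eq.trans hlay.symm ?_
    have hHm := Hq_meas b
    rw [slice_lintegral _ (by fun_prop), ← lintegral_mul_const _ (by fun_prop)]
    congr 1
    ext t
    by_cases ht : t ∈ Ioc (1 : ℝ) 2
    swap
    · simp [hbi, consE_zero, hw, ht]
    have ht0 : 0 < t := by linarith [ht.1]
    have hm : Measurable (fun y : Eu k => consE t y) := by
      unfold consE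
      refine (PiLp.volume_preserving_toLp (Fin (k + 1))).measurable.comp ?_
      refine measurable_pi_iff.2 fun i => ?_
      refine Fin.cases ?_ (fun j => ?_) i
      · simp
      · simp only [Fin.cons_succ]; fun_prop
    rw [lintegral_scaleE _ (by fun_prop) t ht0, ← lintegral_const_mul _ (by fun_prop),
      ← lintegral_const_mul _ (by fun_prop)]
    congr 1
    ext y
    have hsc : consE t (t • y) = t • consE 1 y := by
      ext i
      refine Fin.cases ?_ (fun j => ?_) i <;> simp [consE]
    rw [hsc, Hq_hom b t ht0, inner_smul_right, hbi, consE_zero, mul_one, norm_smul]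
    have hn1 : ‖consE 1 y‖ = √(1 + ‖y‖ ^ 2) := by
      rw [← Real.sqrt_sq (norm_nonneg (consE 1 y)), consE_norm]; simp
    have hH : Hq b (consE 1 y) = ENNReal.ofReal |1 - ((k : ℝ) + 1) / (1 + ‖y‖ ^ 2)| := by
      unfold Hq
      rw [hb1, hbi, consE_zero, consE_norm]; simp
    rw [hH, hn1]
    have h2 : ENNReal.ofReal (t ^ k) * ENNReal.ofReal ((‖t‖ * √(1 + ‖y‖ ^ 2)) ^ (k + 1))⁻¹ =
      ENNReal.ofReal t⁻¹ * ENNReal.ofReal (√(1 + ‖y‖ ^ 2) ^ (k + 1))⁻¹ := by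
      rw [← ENNReal.ofReal_mul (by positivity), ← ENNReal.ofReal_mul (by positivity),
        Real.norm_of_nonneg ht0.le]
      congr 1
      field_simp
      ring
    calc _ = w t * (ENNReal.ofReal (t ^ k) * ENNReal.ofReal ((‖t‖ * √(1 + ‖y‖ ^ 2)) ^ (k + 1))⁻¹) *
        ENNReal.ofReal |1 - ((k : ℝ) + 1) / (1 + ‖y‖ ^ 2)| := by ring
      _ = _ := by rw [h2]; ring
  rw [hs2, Fant_val k hk, Cconst]
  have := sphereArea_pos (k := k + 1) (by omega)
  have h3 := sphereArea_pos hk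
  rw [show (2 : ℝ≥0∞) = ENNReal.ofReal 2 by simp, ← ENNReal.ofReal_mul (by positivity), ← ENNReal.ofReal_mul (by positivity)]
  congr 1
  push_cast
  simp only [add_sub_cancel_right]
  field_simp
  ring

end

section
open Set Topology

/-- The radial Laplacian coefficient. -/
def mfun (n : ℕ) (f : ℝ → ℝ) (s : ℝ) : ℝ := 4 * s * deriv (deriv f) s + (2 * n + 4) * deriv f s

/-- Properties of the truncated radial profile. -/
def Prof (n : ℕ) (C K L a : ℝ) (f : ℝ → ℝ) : Prop :=
  ContDiff ℝ 3 f ∧ (∀ s, Real.exp L ≤ s → f s = 0) ∧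
  (∀ r, a ≤ r → ∃ q q1, |q| ≤ 1 ∧ |q1| ≤ C / L ∧ f (r ^ 2) = (r ^ n)⁻¹ * q ∧
    2 * r ^ 2 * deriv f (r ^ 2) = (r ^ n)⁻¹ * (- n * q + q1)) ∧
  (∀ r, 1 ≤ r → |mfun n f (r ^ 2)| ≤ C / L * (r ^ (n + 2))⁻¹) ∧
  (∀ r, a ≤ r → r ≤ 1 → mfun n f (r ^ 2) = 0) ∧
  deriv f (a ^ 2) = - (n / 2) * (a ^ (n + 2))⁻¹ ∧
  (∀ r, 0 ≤ r → r ≤ a → |mfun n f (r ^ 2)| ≤ K * (a ^ (n + 2))⁻¹)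


lemma TT_smooth : ContDiff ℝ 4 Real.smoothTransition := Real.smoothTransition.contDiff

lemma TT_d1 : ContDiff ℝ 3 (deriv Real.smoothTransition) := by
  have := TT_smooth
  rw [show (4 : WithTop ℕ∞) = 3 + 1 by norm_num] at this
  exact (contDiff_succ_iff_deriv.1 this).2.2

lemma TT_d2 : ContDiff ℝ 2 (deriv (deriv Real.smoothTransition)) := by
  have := TT_d1
  rw [show (3 : WithTop ℕ∞) = 2 + 1 by norm_num] at this
  exact (contDiff_succ_iff_deriv.1 this).2.2

lemma TT_mono : Monotone Real.smoothTransition := Real.smoothTransition.monotone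

lemma TT_d1_nonneg (x : ℝ) : 0 ≤ deriv Real.smoothTransition x := TT_mono.deriv_nonneg

lemma TT_d1_zero (x : ℝ) (hx : x ≤ 0 ∨ 1 ≤ x) : deriv Real.smoothTransition x = 0 := by
  rcases hx with hx | hx
  · apply IsLocalMin.deriv_eq_zero
    apply Eventually.of_forall
    intro y
    rw [Real.smoothTransition.zero_of_nonpos hx]
    exact Real.smoothTransition.nonneg y
  · apply IsLocalMax.deriv_eq_zero
    apply Eventually.of_forall
    intro y
    rw [Real.smoothTransition.one_of_one_le hx]
    exact Real.smoothTransition.le_one y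

lemma TT_d2_zero (x : ℝ) (hx : x ≤ 0 ∨ 1 ≤ x) : deriv (deriv Real.smoothTransition) x = 0 := by
  apply IsLocalMin.deriv_eq_zero
  apply Eventually.of_forall
  intro y
  rw [TT_d1_zero x hx]
  exact TT_d1_nonneg y

lemma TT_bound : ∃ A : ℝ, 0 < A ∧ ∀ x, |deriv Real.smoothTransition x| ≤ A ∧ |deriv (deriv Real.smoothTransition) x| ≤ A ∧
    |x * deriv Real.smoothTransition x| ≤ A := by
  obtain ⟨A1, h1⟩ := isCompact_Icc.exists_bound_of_continuousOn (s := Icc (0 : ℝ) 1)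
    TT_d1.continuous.continuousOn
  obtain ⟨A2, h2⟩ := isCompact_Icc.exists_bound_of_continuousOn (s := Icc (0 : ℝ) 1)
    TT_d2.continuous.continuousOn
  refine ⟨|A1| + |A2| + 1, by positivity, fun x => ?_⟩
  have p1 := abs_nonneg A1
  have p2 := abs_nonneg A2
  by_cases hx : x ∈ Icc (0 : ℝ) 1
  · have h1 := (h1 x hx).trans (le_abs_self A1)
    have h2 := (h2 x hx).trans (le_abs_self A2)
    rw [Real.norm_eq_abs] at h1 h2
    refine ⟨by linarith, by linarith, ?_⟩
    rw [abs_mul, abs_of_nonneg hx.1]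
    nlinarith [hx.1, hx.2, abs_nonneg (deriv Real.smoothTransition x)]
  · have : x ≤ 0 ∨ 1 ≤ x := by
      by_contra h
      push Not at h
      exact hx ⟨h.1.le, h.2.le⟩
    rw [TT_d1_zero x this, TT_d2_zero x this]
    simp only [mul_zero, abs_zero]
    exact ⟨by positivity, by positivity, by positivity⟩

lemma rpow_mul_deriv (c : ℝ) (h : ℝ → ℝ) (h1 s : ℝ) (hs : 0 < s) (hh : HasDerivAt h (h1 / s) s) :
    HasDerivAt (fun s => s ^ c * h s) (s ^ (c - 1) * (c * h s + h1)) s := by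
  have := (Real.hasDerivAt_rpow_const (p := c) (Or.inl hs.ne')).mul hh
  refine this.congr_deriv ?_
  rw [Real.rpow_sub_one hs.ne']
  field_simp

lemma rpow_half {n : ℕ} (r : ℝ) (hr : 0 < r) : (r ^ 2) ^ (-((n : ℝ) / 2)) = (r ^ n)⁻¹ := by
  rw [← Real.rpow_natCast r 2, ← Real.rpow_mul hr.le, ← Real.rpow_natCast r n, ← Real.rpow_neg hr.le]
  congr 1; push_cast; ring

lemma rpow_half1 {n : ℕ} (r : ℝ) (hr : 0 < r) : (r ^ 2) ^ (-((n : ℝ) / 2) - 1) = (r ^ (n + 2))⁻¹ := by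
  rw [Real.rpow_sub_one (by positivity), rpow_half r hr, pow_add]
  field_simp

lemma prof_exists (n : ℕ) : ∃ C K : ℝ, 0 ≤ C ∧ 0 ≤ K ∧ ∀ L ≥ 1, ∀ a, 0 < a → a ≤ 1 / 2 →
    ∃ f, Prof n C K L a f := by
  obtain ⟨A, hA, hT⟩ := TT_bound
  set c : ℝ := -((n : ℝ) / 2) with hc
  set f1 : ℝ → ℝ := fun s => Real.smoothTransition (4 * s - 2) * s ^ c with hf1
  have hf1s : ContDiff ℝ 3 f1 := by
    rw [contDiff_iff_contDiffAt]
    intro s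
    by_cases hs : s < 1 / 2
    · have : f1 =ᶠ[𝓝 s] fun _ => 0 := by
        filter_upwards [Iio_mem_nhds hs] with t ht
        have ht : t < 1 / 2 := ht
        simp only [hf1]
        rw [Real.smoothTransition.zero_of_nonpos (by linarith), zero_mul]
      exact contDiffAt_const.congr_of_eventuallyEq this
    · have h1 : ContDiffAt ℝ 3 (fun s : ℝ => s ^ c) s :=
        Real.contDiffAt_rpow_const_of_ne (by linarith)
      have h2 : ContDiff ℝ 3 (fun s => Real.smoothTransition (4 * s - 2)) :=
        (TT_smooth.of_le (by norm_num)).comp (by fun_prop)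
      exact h2.contDiffAt.mul h1
  have hm1 : Continuous (mfun n f1) := by
    have h1 : ContDiff ℝ 2 (deriv f1) := by
      rw [show (3 : WithTop ℕ∞) = 2 + 1 by norm_num] at hf1s
      exact (contDiff_succ_iff_deriv.1 hf1s).2.2
    have h2 : Continuous (deriv (deriv f1)) := h1.continuous_deriv (by norm_num)
    have := h1.continuous
    unfold mfun
    fun_prop
  obtain ⟨K, hK⟩ := isCompact_Icc.exists_bound_of_continuousOn (s := Icc (0 : ℝ) 1) hm1.continuousOn
  refine ⟨(2 * n + 4) * A, |K|, by positivity, by positivity, ?_⟩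
  intro L hL a ha ha2
  have hL0 : 0 < L := by linarith
  set Q : ℝ → ℝ := fun s => 1 - Real.smoothTransition (Real.log s / L) with hQ
  have hQs : ContDiff ℝ 3 Q := by
    rw [contDiff_iff_contDiffAt]
    intro s
    by_cases hs : s = 0
    · subst hs
      have : Q =ᶠ[𝓝 0] fun _ => 1 := by
        filter_upwards [Ioo_mem_nhds (show (-1 : ℝ) < 0 by norm_num) (show (0 : ℝ) < 1 by norm_num)] with t ht
        simp only [hQ]
        rw [Real.smoothTransition.zero_of_nonpos, sub_zero]
        rw [← Real.log_abs]
        apply div_nonpos_of_nonpos_of_nonneg _ hL0.le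
        apply Real.log_nonpos (abs_nonneg _)
        rw [abs_le]; exact ⟨ht.1.le, ht.2.le⟩
      exact contDiffAt_const.congr_of_eventuallyEq this
    · have h1 : ContDiffAt ℝ 3 (fun s => Real.log s / L) s :=
        (Real.contDiffAt_log.2 hs).div_const _
      exact contDiffAt_const.sub ((TT_smooth.of_le (by norm_num)).contDiffAt.comp s h1)
  set f : ℝ → ℝ := fun s => (a ^ n)⁻¹ * f1 (s / a ^ 2) * Q s with hf
  have hQ1 : ∀ s, 0 ≤ s → s ≤ 1 → Q s = 1 := by
    intro s h0 h1
    simp only [hQ]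
    rw [Real.smoothTransition.zero_of_nonpos, sub_zero]
    exact div_nonpos_of_nonpos_of_nonneg (Real.log_nonpos h0 h1) hL0.le
  -- the regime of large argument
  have hfar : ∀ s, 3 / 4 * a ^ 2 < s → f s = s ^ c * Q s := by
    intro s hs
    have hs0 : 0 < s := lt_trans (by positivity) hs
    simp only [hf, hf1]
    rw [Real.smoothTransition.one_of_one_le, one_mul, Real.div_rpow hs0.le (by positivity), hc,
      rpow_half a ha]
    · field_simp
    · have : 3 / 4 < s / a ^ 2 := by rw [lt_div_iff₀ (by positivity)]; exact hs
      linarith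
  set Q1 : ℝ → ℝ := fun s => - deriv Real.smoothTransition (Real.log s / L) / L with hQ1d
  set Q2 : ℝ → ℝ := fun s => - deriv (deriv Real.smoothTransition) (Real.log s / L) / L ^ 2 with hQ2d
  have dQ : ∀ s, 0 < s → HasDerivAt Q (Q1 s / s) s := by
    intro s hs
    have h1 : HasDerivAt Real.smoothTransition (deriv Real.smoothTransition (Real.log s / L)) (Real.log s / L) :=
      (TT_smooth.differentiable (by norm_num) _).hasDerivAt
    have := (h1.comp s ((Real.hasDerivAt_log hs.ne').div_const L)).const_sub 1
    refine this.congr_deriv ?_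
    simp only [hQ1d]; field_simp
  have dQ1 : ∀ s, 0 < s → HasDerivAt Q1 (Q2 s / s) s := by
    intro s hs
    have h1 : HasDerivAt (deriv Real.smoothTransition) (deriv (deriv Real.smoothTransition) (Real.log s / L)) (Real.log s / L) :=
      (TT_d1.differentiable (by norm_num) _).hasDerivAt
    have := ((h1.comp s ((Real.hasDerivAt_log hs.ne').div_const L)).neg).div_const L
    refine this.congr_deriv ?_
    simp only [hQ2d]; field_simp
  have df : ∀ s, 3 / 4 * a ^ 2 < s → deriv f s = s ^ (c - 1) * (c * Q s + Q1 s) := by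
    intro s hs
    have hs0 : 0 < s := lt_trans (by positivity) hs
    have : f =ᶠ[𝓝 s] fun s => s ^ c * Q s := by
      filter_upwards [Ioi_mem_nhds hs] with t ht using hfar t ht
    rw [this.deriv_eq]
    exact (rpow_mul_deriv c Q _ s hs0 (dQ s hs0)).deriv
  have ddf : ∀ s, 3 / 4 * a ^ 2 < s → deriv (deriv f) s =
      s ^ (c - 1 - 1) * ((c - 1) * (c * Q s + Q1 s) + (c * Q1 s + Q2 s)) := by
    intro s hs
    have hs0 : 0 < s := lt_trans (by positivity) hs
    have : deriv f =ᶠ[𝓝 s] fun s => s ^ (c - 1) * (c * Q s + Q1 s) := by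
      filter_upwards [Ioi_mem_nhds hs] with t ht using df t ht
    rw [this.deriv_eq]
    refine (rpow_mul_deriv (c - 1) (fun s => c * Q s + Q1 s) _ s hs0 ?_).deriv
    refine (((dQ s hs0).const_mul c).add (dQ1 s hs0)).congr_deriv ?_
    field_simp
  have hm : ∀ s, 3 / 4 * a ^ 2 < s → mfun n f s = s ^ (c - 1) * (4 * c * Q1 s + 4 * Q2 s) := by
    intro s hs
    have hs0 : 0 < s := lt_trans (by positivity) hs
    unfold mfun
    rw [df s hs, ddf s hs, Real.rpow_sub_one hs0.ne' (c - 1), show (n : ℝ) = - 2 * c by rw [hc]; ring]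
    field_simp
    ring
  have hra : ∀ r, a ≤ r → 3 / 4 * a ^ 2 < r ^ 2 := by
    intro r hr
    nlinarith
  have hQ1b : ∀ s, |Q1 s| ≤ A / L := by
    intro s
    simp only [hQ1d]
    rw [abs_div, abs_neg, abs_of_pos hL0]
    gcongr
    exact (hT _).1
  have hQ2b : ∀ s, |Q2 s| ≤ A / L := by
    intro s
    simp only [hQ2d]
    rw [abs_div, abs_neg, abs_of_pos (pow_pos hL0 2)]
    calc _ ≤ A / L ^ 2 := by gcongr; exact (hT _).2.1
      _ ≤ A / L := by gcongr; nlinarith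
  refine ⟨f, ?_, ?_, ?_, ?_, ?_, ?_, ?_⟩
  · exact (contDiff_const.mul (hf1s.comp (by fun_prop))).mul hQs
  · intro s hs
    have : Q s = 0 := by
      simp only [hQ]
      rw [Real.smoothTransition.one_of_one_le, sub_self]
      rw [one_le_div hL0, Real.le_log_iff_exp_le (lt_of_lt_of_le (Real.exp_pos _) hs)]
      exact hs
    simp only [hf, this, mul_zero]
  · intro r hr
    have hr0 : 0 < r := lt_of_lt_of_le ha hr
    refine ⟨Q (r ^ 2), 2 * Q1 (r ^ 2), ?_, ?_, ?_, ?_⟩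
    · simp only [hQ]
      rw [abs_le]
      have h1 := Real.smoothTransition.nonneg (Real.log (r ^ 2) / L)
      have h2 := Real.smoothTransition.le_one (Real.log (r ^ 2) / L)
      constructor <;> linarith
    · rw [abs_mul, abs_two]
      calc 2 * |Q1 (r ^ 2)| ≤ 2 * (A / L) := by gcongr; exact hQ1b _
        _ ≤ (2 * n + 4) * (A / L) := by gcongr; linarith [(Nat.cast_nonneg n : (0 : ℝ) ≤ n)]
        _ = _ := by ring
    · rw [hfar _ (hra r hr), hc, rpow_half r hr0]
    · rw [df _ (hra r hr), hc, rpow_half1 r hr0, pow_add]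
      field_simp
  · intro r hr
    have hr0 : 0 < r := by linarith
    rw [hm _ (hra r (by linarith)), hc, rpow_half1 r hr0, abs_mul, abs_of_pos (by positivity), mul_comm]
    gcongr
    rw [← hc]
    calc |4 * c * Q1 (r ^ 2) + 4 * Q2 (r ^ 2)| ≤ |4 * c * Q1 (r ^ 2)| + |4 * Q2 (r ^ 2)| := abs_add_le _ _
      _ = 2 * n * |Q1 (r ^ 2)| + 4 * |Q2 (r ^ 2)| := by
        rw [abs_mul, abs_mul 4 (Q2 _), hc, abs_of_nonneg (by norm_num : (0 : ℝ) ≤ 4),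
          show (4 : ℝ) * -(n / 2 : ℝ) = - (2 * n) by ring, abs_neg, abs_of_nonneg (by positivity)]
      _ ≤ 2 * n * (A / L) + 4 * (A / L) := by gcongr; exact hQ1b _; exact hQ2b _
      _ = _ := by ring
  · intro r hr hr1
    have hr0 : 0 < r := lt_of_lt_of_le ha hr
    have hx : Real.log (r ^ 2) / L ≤ 0 :=
      div_nonpos_of_nonpos_of_nonneg (Real.log_nonpos (by positivity) (pow_le_one₀ hr0.le hr1)) hL0.le
    rw [hm _ (hra r hr)]
    simp only [hQ1d, hQ2d]
    rw [TT_d1_zero _ (Or.inl hx), TT_d2_zero _ (Or.inl hx)]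
    simp
  · have hx : Real.log (a ^ 2) / L ≤ 0 :=
      div_nonpos_of_nonpos_of_nonneg (Real.log_nonpos (by positivity) (pow_le_one₀ ha.le (by linarith))) hL0.le
    rw [df _ (hra a le_rfl), hc, rpow_half1 a ha, hQ1 _ (by positivity) (pow_le_one₀ ha.le (by linarith))]
    simp only [hQ1d]
    rw [TT_d1_zero _ (Or.inl hx)]
    simp
    ring
  · have dG : ∀ s, s ∈ Ioo (-1 : ℝ) 1 → deriv f s = (a ^ (n + 2))⁻¹ * deriv f1 (s / a ^ 2) := by
      intro s hs
      have : f =ᶠ[𝓝 s] fun s => (a ^ n)⁻¹ * f1 (s / a ^ 2) := by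
        filter_upwards [Ioo_mem_nhds hs.1 hs.2] with t ht
        by_cases h0 : 0 ≤ t
        · simp only [hf, hQ1 t h0 ht.2.le, mul_one]
        · have : f1 (t / a ^ 2) = 0 := by
            simp only [hf1]
            rw [Real.smoothTransition.zero_of_nonpos, zero_mul]
            have : t / a ^ 2 ≤ 0 := div_nonpos_of_nonpos_of_nonneg (by linarith) (by positivity)
            linarith
          simp only [hf, this, mul_zero, zero_mul]
      rw [this.deriv_eq]
      have h1 : HasDerivAt f1 (deriv f1 (s / a ^ 2)) (s / a ^ 2) :=
        (hf1s.differentiable (by norm_num) _).hasDerivAt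
      have h2 := (h1.comp s ((hasDerivAt_id s).div_const (a ^ 2))).const_mul (a ^ n)⁻¹
      refine HasDerivAt.deriv (h2.congr_deriv ?_)
      rw [pow_add]; field_simp
    have ddG : ∀ s, s ∈ Ioo (-1 : ℝ) 1 → deriv (deriv f) s =
        (a ^ (n + 2))⁻¹ * (deriv (deriv f1) (s / a ^ 2) / a ^ 2) := by
      intro s hs
      have : deriv f =ᶠ[𝓝 s] fun s => (a ^ (n + 2))⁻¹ * deriv f1 (s / a ^ 2) := by
        filter_upwards [Ioo_mem_nhds hs.1 hs.2] with t ht using dG t ht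
      rw [this.deriv_eq]
      have hd : ContDiff ℝ 2 (deriv f1) := by
        rw [show (3 : WithTop ℕ∞) = 2 + 1 by norm_num] at hf1s
        exact (contDiff_succ_iff_deriv.1 hf1s).2.2
      have h1 : HasDerivAt (deriv f1) (deriv (deriv f1) (s / a ^ 2)) (s / a ^ 2) :=
        (hd.differentiable (by norm_num) _).hasDerivAt
      have h2 := (h1.comp s ((hasDerivAt_id s).div_const (a ^ 2))).const_mul (a ^ (n + 2))⁻¹
      refine HasDerivAt.deriv (h2.congr_deriv ?_)
      field_simp
    intro r hr0 hra'
    have hr1 : r ^ 2 ∈ Ioo (-1 : ℝ) 1 := ⟨by nlinarith, by nlinarith⟩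
    have : mfun n f (r ^ 2) = (a ^ (n + 2))⁻¹ * mfun n f1 (r ^ 2 / a ^ 2) := by
      unfold mfun
      rw [dG _ hr1, ddG _ hr1]
      field_simp
    rw [this, abs_mul, abs_of_pos (by positivity : 0 < (a ^ (n + 2))⁻¹), mul_comm]
    refine mul_le_mul_of_nonneg_right ?_ (by positivity)
    refine (hK _ ⟨by positivity, ?_⟩).trans (le_abs_self _)
    rw [div_le_one (by positivity)]
    gcongr

end

section
open Set Topology

/-- Coordinate Laplacian. -/
def lapl {n : ℕ} (u : Eu n → ℝ) (x : Eu n) : ℝ :=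
  ∑ i, fderiv ℝ (fun y => fderiv ℝ u y (EuclideanSpace.single i 1)) x (EuclideanSpace.single i 1)

/-- The dipole kernel with a radial profile. -/
def Bk {n : ℕ} (f : ℝ → ℝ) (l z : Eu n) : ℝ := inner ℝ l z * f (‖z‖ ^ 2)

/-- The directional derivative of the kernel. -/
def dBk {n : ℕ} (f : ℝ → ℝ) (l z w : Eu n) : ℝ :=
  inner ℝ l w * f (‖z‖ ^ 2) + 2 * (inner ℝ l z * inner ℝ z w) * deriv f (‖z‖ ^ 2)

lemma hasFDerivAt_inner_left {n : ℕ} (l z : Eu n) :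
    HasFDerivAt (fun z : Eu n => inner ℝ l z) (innerSL ℝ l) z := (innerSL ℝ l).hasFDerivAt

lemma hasFDerivAt_radial {n : ℕ} (f : ℝ → ℝ) (f' : ℝ) (z : Eu n) (hf : HasDerivAt f f' (‖z‖ ^ 2)) :
    HasFDerivAt (fun z : Eu n => f (‖z‖ ^ 2)) (f' • (2 • innerSL ℝ z)) z :=
  hf.comp_hasFDerivAt z (hasStrictFDerivAt_norm_sq z).hasFDerivAt

lemma Bk_contDiff {n : ℕ} (f : ℝ → ℝ) (hf : ContDiff ℝ 3 f) (l : Eu n) : ContDiff ℝ 3 (Bk f l) := by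
  unfold Bk
  exact (innerSL ℝ l).contDiff.mul (hf.comp (contDiff_norm_sq ℝ))

lemma prof_d1 (f : ℝ → ℝ) (hf : ContDiff ℝ 3 f) : ContDiff ℝ 2 (deriv f) := by
  rw [show (3 : WithTop ℕ∞) = 2 + 1 by norm_num] at hf
  exact (contDiff_succ_iff_deriv.1 hf).2.2

lemma fderiv_Bk {n : ℕ} (f : ℝ → ℝ) (hf : ContDiff ℝ 3 f) (l z w : Eu n) :
    fderiv ℝ (Bk f l) z w = dBk f l z w := by
  have h1 : HasDerivAt f (deriv f (‖z‖ ^ 2)) (‖z‖ ^ 2) :=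
    (hf.differentiable (by norm_num) _).hasDerivAt
  have h := (hasFDerivAt_inner_left l z).mul (hasFDerivAt_radial f _ z h1)
  have h' : fderiv ℝ (Bk f l) z = _ := h.fderiv
  rw [h']
  simp [dBk]
  ring

lemma lapl_Bk {n : ℕ} (f : ℝ → ℝ) (hf : ContDiff ℝ 3 f) (l z : Eu n) :
    lapl (Bk f l) z = inner ℝ l z * mfun n f (‖z‖ ^ 2) := by
  have h1 : HasDerivAt f (deriv f (‖z‖ ^ 2)) (‖z‖ ^ 2) :=
    (hf.differentiable (by norm_num) _).hasDerivAt
  have h2 : HasDerivAt (deriv f) (deriv (deriv f) (‖z‖ ^ 2)) (‖z‖ ^ 2) :=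
    ((prof_d1 f hf).differentiable (by norm_num) _).hasDerivAt
  have key : ∀ e : Eu n, fderiv ℝ (fun y => fderiv ℝ (Bk f l) y e) z e =
      4 * (inner ℝ l e * inner ℝ z e) * deriv f (‖z‖ ^ 2) + 2 * inner ℝ l z * ‖e‖ ^ 2 * deriv f (‖z‖ ^ 2)
      + 4 * inner ℝ l z * (inner ℝ z e) ^ 2 * deriv (deriv f) (‖z‖ ^ 2) := by
    intro e
    simp_rw [fderiv_Bk f hf l]
    have i1 : HasFDerivAt (fun z : Eu n => inner ℝ z e) (innerSL ℝ e) z := by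
      simp_rw [real_inner_comm e]; exact hasFDerivAt_inner_left e z
    have := ((hasFDerivAt_radial f _ z h1).const_mul (inner ℝ l e)).add
      ((((hasFDerivAt_inner_left l z).mul i1).const_mul 2).mul
        (hasFDerivAt_radial (deriv f) _ z h2))
    have h' : fderiv ℝ (fun y => dBk f l y e) z = _ := this.fderiv
    rw [h']
    simp [real_inner_comm]
    ring
  unfold lapl
  simp_rw [key]
  rw [Finset.sum_add_distrib, Finset.sum_add_distrib]
  have e1 : ∑ i, 4 * (inner ℝ l (EuclideanSpace.single i (1 : ℝ)) * inner ℝ z (EuclideanSpace.single i (1 : ℝ))) * deriv f (‖z‖ ^ 2)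
      = 4 * inner ℝ l z * deriv f (‖z‖ ^ 2) := by
    rw [← Finset.sum_mul, ← Finset.mul_sum]
    congr 2
    simp [EuclideanSpace.inner_single_right, PiLp.inner_apply, mul_comm]
  have e2 : ∑ i, 4 * inner ℝ l z * inner ℝ z (EuclideanSpace.single i (1 : ℝ)) ^ 2 * deriv (deriv f) (‖z‖ ^ 2)
      = 4 * inner ℝ l z * ‖z‖ ^ 2 * deriv (deriv f) (‖z‖ ^ 2) := by
    rw [← Finset.sum_mul, ← Finset.mul_sum]
    congr 2
    simp [EuclideanSpace.inner_single_right, EuclideanSpace.norm_sq_eq]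
  rw [e1, e2]
  simp [mfun]
  ring

lemma inner_sq_integral {n : ℕ} (hn : 1 ≤ n) (φ : ℝ → ℝ) (hφ : Continuous φ) (a : ℝ) (g l : Eu n) :
    (n : ℝ) * ∫ z in ball (0 : Eu n) a, inner ℝ g z * inner ℝ l z * φ ‖z‖ =
      inner ℝ g l * ∫ z in ball (0 : Eu n) a, ‖z‖ ^ 2 * φ ‖z‖ := by
  have hIntg : ∀ F : Eu n → ℝ, Continuous F → IntegrableOn F (ball 0 a) := fun F hF =>
    (hF.continuousOn.integrableOn_compact (isCompact_closedBall 0 a)).mono_set ball_subset_closedBall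
  set q : Eu n → ℝ := fun x => ∫ z in ball (0 : Eu n) a, (inner ℝ x z) ^ 2 * φ ‖z‖ with hq
  have hT : ∀ (T : Eu n ≃ₗᵢ[ℝ] Eu n) (x : Eu n), q (T x) = q x := by
    intro T x
    simp only [hq]
    rw [← integral_indicator measurableSet_ball, ← integral_indicator measurableSet_ball,
      ← T.measurePreserving.integral_comp T.toHomeomorph.measurableEmbedding]
    congr 1
    ext z
    simp only [indicator, mem_ball_zero_iff, LinearIsometryEquiv.norm_map, LinearIsometryEquiv.inner_map_map]
  have hsc : ∀ (c : ℝ) (x : Eu n), q (c • x) = c ^ 2 * q x := by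
    intro c x
    simp only [hq]
    rw [← integral_const_mul]
    congr 1
    ext z
    rw [inner_smul_left]
    simp
    ring
  set b : Eu n := EuclideanSpace.single ⟨0, hn⟩ 1 with hb
  have hb1 : ‖b‖ = 1 := by simp [b]
  have hqn : ∀ x, q x = ‖x‖ ^ 2 * q b := by
    intro x
    have h := Submodule.reflection_sub (v := ‖x‖ • b) (w := x) (by rw [norm_smul, hb1]; simp)
    rw [← hsc, ← hT (Submodule.reflection (ℝ ∙ ((‖x‖ • b) - x))ᗮ) (‖x‖ • b), h]
  have hpol : ∫ z in ball (0 : Eu n) a, inner ℝ g z * inner ℝ l z * φ ‖z‖ = (q (g + l) - q (g - l)) / 4 := by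
    simp only [hq]
    rw [← integral_sub (hIntg _ (by fun_prop)) (hIntg _ (by fun_prop)), ← integral_div]
    congr 1
    ext z
    rw [inner_add_left, inner_sub_left]
    ring
  have hsum : ∫ z in ball (0 : Eu n) a, ‖z‖ ^ 2 * φ ‖z‖ = n * q b := by
    have : ∀ z : Eu n, ‖z‖ ^ 2 * φ ‖z‖ = ∑ i, (inner ℝ (EuclideanSpace.single i (1 : ℝ)) z) ^ 2 * φ ‖z‖ := by
      intro z
      rw [← Finset.sum_mul]
      congr 1
      simp [EuclideanSpace.inner_single_left, EuclideanSpace.norm_sq_eq]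
    simp_rw [this]
    rw [integral_finsetSum _ (fun i _ => hIntg _ (by fun_prop))]
    change ∑ i, q (EuclideanSpace.single i (1 : ℝ)) = _
    simp_rw [hqn (EuclideanSpace.single _ (1 : ℝ))]
    simp
  rw [hpol, hsum, hqn (g + l), hqn (g - l), norm_add_sq_real, norm_sub_sq_real]
  ring

lemma ball_real {n : ℕ} (hn : 1 ≤ n) : (n : ℝ) * (volume : Measure (Eu n)).real (ball 0 1) = sphereArea n := by
  have := congrArg ENNReal.toReal (sphereArea_eq hn)
  rw [ENNReal.toReal_mul, ENNReal.toReal_ofReal (sphereArea_pos hn).le] at this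
  simpa [Measure.real] using this

lemma mfun_cont (n : ℕ) (f : ℝ → ℝ) (hf : ContDiff ℝ 3 f) : Continuous (mfun n f) := by
  have h1 := prof_d1 f hf
  have h2 : Continuous (deriv (deriv f)) := h1.continuous_deriv (by norm_num)
  have := h1.continuous
  unfold mfun
  fun_prop

lemma near_value {n : ℕ} (hn : 1 ≤ n) (f : ℝ → ℝ) (hf : ContDiff ℝ 3 f) (a : ℝ) (ha : 0 < a)
    (hfa : deriv f (a ^ 2) = - (n / 2) * (a ^ (n + 2))⁻¹) (g l : Eu n) :
    ∫ z in ball (0 : Eu n) a, inner ℝ g z * inner ℝ l z * mfun n f (‖z‖ ^ 2) =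
      - sphereArea n * inner ℝ g l := by
  have hm := mfun_cont n f hf
  have hn0 : (n : ℝ) ≠ 0 := by positivity
  have h1 := inner_sq_integral hn (fun r => mfun n f (r ^ 2)) (by fun_prop) a g l
  have h2 : ∫ z in ball (0 : Eu n) a, ‖z‖ ^ 2 * mfun n f (‖z‖ ^ 2) = - n * sphereArea n := by
    have hne : Nontrivial (Eu n) := by
      have : Nonempty (Fin n) := ⟨⟨0, hn⟩⟩
      infer_instance
    have h3 := integral_fun_norm_addHaar (volume : Measure (Eu n))
      (fun r => (Iio a).indicator (fun r => r ^ 2 * mfun n f (r ^ 2)) r)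
    have h4 : ∫ z in ball (0 : Eu n) a, ‖z‖ ^ 2 * mfun n f (‖z‖ ^ 2) =
        ∫ z : Eu n, (Iio a).indicator (fun r => r ^ 2 * mfun n f (r ^ 2)) ‖z‖ := by
      rw [← integral_indicator measurableSet_ball]
      congr 1
      ext z
      simp only [indicator, mem_ball_zero_iff, mem_Iio]
    rw [h4, h3]
    simp only [finrank_euclideanSpace_fin, nsmul_eq_mul, smul_eq_mul]
    rw [← mul_assoc, ball_real hn]
    have h5 : ∫ y in Ioi (0 : ℝ), y ^ (n - 1) * (Iio a).indicator (fun r => r ^ 2 * mfun n f (r ^ 2)) y =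
        ∫ y in (0 : ℝ)..a, y ^ (n + 1) * mfun n f (y ^ 2) := by
      rw [intervalIntegral.integral_of_le ha.le, integral_Ioc_eq_integral_Ioo,
        ← integral_indicator measurableSet_Ioi, ← integral_indicator measurableSet_Ioo]
      congr 1
      ext y
      by_cases h0 : 0 < y <;> by_cases h1 : y < a <;> simp [indicator, h0, h1]
      have : n + 1 = n - 1 + 2 := by omega
      rw [this, pow_add]; ring
    have h6 : ∫ y in (0 : ℝ)..a, y ^ (n + 1) * mfun n f (y ^ 2) = - n := by
      have hd : ∀ y ∈ uIcc 0 a, HasDerivAt (fun y : ℝ => 2 * y ^ (n + 2) * deriv f (y ^ 2))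
          (y ^ (n + 1) * mfun n f (y ^ 2)) y := by
        intro y _
        have h2 : HasDerivAt (deriv f) (deriv (deriv f) (y ^ 2)) (y ^ 2) :=
          ((prof_d1 f hf).differentiable (by norm_num) _).hasDerivAt
        have hy : HasDerivAt (fun y : ℝ => y ^ 2) (2 * y) y := by simpa using hasDerivAt_pow 2 y
        have h2' : HasDerivAt (fun y : ℝ => deriv f (y ^ 2)) (deriv (deriv f) (y ^ 2) * (2 * y)) y :=
          HasDerivAt.comp (h₂ := deriv f) (h := fun y : ℝ => y ^ 2) y h2 hy
        have h3' : HasDerivAt (fun y : ℝ => 2 * y ^ (n + 2)) (2 * (((n + 2 : ℕ) : ℝ) * y ^ (n + 1))) y :=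
          (hasDerivAt_pow (n + 2) y).const_mul 2
        refine (h3'.mul h2').congr_deriv ?_
        simp only [mfun]
        push_cast
        ring
      rw [intervalIntegral.integral_eq_sub_of_hasDerivAt hd
        (Continuous.intervalIntegrable (by fun_prop) _ _), hfa]
      field_simp
      simp
    rw [h5, h6]; ring
  rw [h2] at h1
  apply mul_left_cancel₀ hn0
  rw [h1]; ring

end

section
open Set Topology

lemma integral_fderiv_zero {n : ℕ} (W : Eu n → ℝ) (hW : ContDiff ℝ 1 W) (hc : HasCompactSupport W) (e : Eu n) :
    ∫ z, fderiv ℝ W z e = 0 := by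
  have hcf : Continuous (fun z => fderiv ℝ W z e) := by
    have := hW.continuous_fderiv (by norm_num)
    fun_prop
  have hcs : HasCompactSupport (fun z => fderiv ℝ W z e) := hc.fderiv_apply ℝ e
  have h := integral_mul_fderiv_eq_neg_fderiv_mul_of_integrable (μ := (volume : Measure (Eu n)))
    (𝕜 := ℝ) (f := fun _ => (1 : ℝ)) (g := W) (v := e) (by simp)
    (by simpa using hcf.integrable_of_hasCompactSupport hcs)
    (by simpa using hW.continuous.integrable_of_hasCompactSupport hc)
    (fun x _ => by fun_prop) (fun x _ => hW.differentiable (by norm_num) x)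
  simpa using h

lemma green {n : ℕ} (v Φ : Eu n → ℝ) (κ : ℝ → ℝ) (ν : Eu n) (hv : ContDiff ℝ 2 v) (hΦ : ContDiff ℝ 2 Φ)
    (hκ : ContDiff ℝ 2 κ) (K : Set (Eu n)) (hK : IsCompact K)
    (h0 : ∀ z ∉ K, κ (inner ℝ ν z) = 0 ∨ (Φ z = 0 ∧ fderiv ℝ Φ z = 0)) :
    ∫ z, (deriv κ (inner ℝ ν z) * (v z * fderiv ℝ Φ z ν - Φ z * fderiv ℝ v z ν) +
      κ (inner ℝ ν z) * (v z * lapl Φ z - Φ z * lapl v z)) = 0 := by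
  set e : Fin n → Eu n := fun i => EuclideanSpace.single i 1 with he
  have hd : ∀ (g : Eu n → ℝ) (hg : ContDiff ℝ 2 g) (i : Fin n), ContDiff ℝ 1 (fun z => fderiv ℝ g z (e i)) := by
    intro g hg i
    exact (hg.fderiv_right (m := 1) (by norm_num)).clm_apply contDiff_const
  set W : Fin n → Eu n → ℝ := fun i z => κ (inner ℝ ν z) * (v z * fderiv ℝ Φ z (e i) - Φ z * fderiv ℝ v z (e i)) with hW
  have hψ : ContDiff ℝ 2 (fun z : Eu n => κ (inner ℝ ν z)) := hκ.comp (innerSL ℝ ν).contDiff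
  have hW1 : ∀ i, ContDiff ℝ 1 (W i) := by
    intro i
    have a1 := hd v hv i
    have a2 := hd Φ hΦ i
    have a3 := hv.of_le (show (1 : WithTop ℕ∞) ≤ 2 by norm_num)
    have a4 := hΦ.of_le (show (1 : WithTop ℕ∞) ≤ 2 by norm_num)
    have a5 := hψ.of_le (show (1 : WithTop ℕ∞) ≤ 2 by norm_num)
    exact a5.mul ((a3.mul a2).sub (a4.mul a1))
  have hWc : ∀ i, HasCompactSupport (W i) := by
    intro i
    refine HasCompactSupport.intro hK fun z hz => ?_
    rcases h0 z hz with h | ⟨h1, h2⟩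
    · simp [hW, h]
    · simp [hW, h1, h2]
  have hI : ∀ i, Integrable (fun z => fderiv ℝ (W i) z (e i)) := by
    intro i
    refine Continuous.integrable_of_hasCompactSupport ?_ ((hWc i).fderiv_apply ℝ (e i))
    have := (hW1 i).continuous_fderiv (by norm_num)
    fun_prop
  have hs : ∫ z, ∑ i, fderiv ℝ (W i) z (e i) = 0 := by
    rw [integral_finsetSum _ (fun i _ => hI i)]
    exact Finset.sum_eq_zero fun i _ => integral_fderiv_zero _ (hW1 i) (hWc i) _
  rw [← hs]
  congr 1
  ext z
  have hk : HasDerivAt κ (deriv κ (inner ℝ ν z)) (inner ℝ ν z) :=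
    (hκ.differentiable (by norm_num) _).hasDerivAt
  have hψd : HasFDerivAt (fun z : Eu n => κ (inner ℝ ν z)) (deriv κ (inner ℝ ν z) • innerSL ℝ ν) z :=
    hk.comp_hasFDerivAt z (hasFDerivAt_inner_left ν z)
  have hterm : ∀ i, fderiv ℝ (W i) z (e i) =
      deriv κ (inner ℝ ν z) * (v z * (ν i * fderiv ℝ Φ z (e i)) - Φ z * (ν i * fderiv ℝ v z (e i))) +
      κ (inner ℝ ν z) * (v z * fderiv ℝ (fun y => fderiv ℝ Φ y (e i)) z (e i)
        - Φ z * fderiv ℝ (fun y => fderiv ℝ v y (e i)) z (e i)) := by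
    intro i
    have b1 := (hv.differentiable (by norm_num) z).hasFDerivAt
    have b2 := (hΦ.differentiable (by norm_num) z).hasFDerivAt
    have b3 := ((hd v hv i).differentiable (by norm_num) z).hasFDerivAt
    have b4 := ((hd Φ hΦ i).differentiable (by norm_num) z).hasFDerivAt
    have h' : fderiv ℝ (W i) z = _ := (hψd.mul ((b1.mul b4).sub (b2.mul b3))).fderiv
    rw [h']
    have hi : inner ℝ ν (e i) = ν i := by simp [he, EuclideanSpace.inner_single_right]
    simp [hi]
    ring
  have hexp : ∀ T : Eu n →L[ℝ] ℝ, T ν = ∑ i, ν i * T (e i) := by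
    intro T
    conv_lhs => rw [show ν = ∑ i, ν i • e i by
      ext j; simp [he, Finset.sum_apply, Pi.single_apply]]
    simp
  simp_rw [hterm]
  rw [Finset.sum_add_distrib, ← Finset.mul_sum, ← Finset.mul_sum, Finset.sum_sub_distrib, Finset.sum_sub_distrib,
    ← Finset.mul_sum, ← Finset.mul_sum, ← Finset.mul_sum, ← Finset.mul_sum, ← hexp, ← hexp]
  rfl

end

section
open Set Topology ENNReal

lemma half_value {n : ℕ} (hn : 2 ≤ n) (l ν : Eu n) (hl : ‖l‖ = 1) (hν : ‖ν‖ = 1) (D : ℝ) (hD : 0 ≤ D) :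
    sphI (halfF ν (fun z => Ha l ν z + ENNReal.ofReal D)) ≤
      ENNReal.ofReal ((Cconst n * sphereArea n + D * sphereArea n) / 2) := by
  have hn1 : 1 ≤ n := by omega
  have hω := sphereArea_pos hn1
  have hν0 : ν ≠ 0 := by intro h; simp [h] at hν
  have h1 := sphI_half hn1 (fun z => Ha l ν z + ENNReal.ofReal D) ((Ha_meas l ν).add measurable_const)
    (fun c hc z => by simp only [Ha_hom l ν c hc z]) (fun z => by simp [Ha]) ν hν0
  have hS : 0 ≤ Cconst n * sphereArea n := by
    refine mul_nonneg ?_ hω.le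
    have := (sphereArea_pos (show 1 ≤ n - 1 by omega)).le
    have hn' : (1 : ℝ) ≤ n := by exact_mod_cast hn1
    have : 0 ≤ ((n : ℝ) - 1) ^ (((n : ℝ) - 1) / 2) := Real.rpow_nonneg (by linarith) _
    unfold Cconst
    positivity
  have h2 : sphI (fun z => Ha l ν z + ENNReal.ofReal D) ≤
      ENNReal.ofReal (Cconst n * sphereArea n + D * sphereArea n) := by
    rw [ENNReal.ofReal_add hS (by positivity), ENNReal.ofReal_mul hD, ← sphI_Hq_val hn ν hν, ← sphere_one hn1]
    refine le_trans (le_of_eq ?_) (add_le_add_left (sphI_Ha_le hn1 ν l ν hν hl hν) _)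
    unfold sphI
    rw [lintegral_add_right _ measurable_const, lintegral_const]
  rw [ENNReal.ofReal_div_of_pos (by norm_num), ENNReal.le_div_iff_mul_le (by simp) (by simp), mul_comm]
  simpa [h1] using h2

lemma dBk_bound {n : ℕ} (f : ℝ → ℝ) (C K L a : ℝ) (ha : 0 < a) (hf : Prof n C K L a f)
    (l ν : Eu n) (hl : ‖l‖ = 1) (hν : ‖ν‖ = 1) (z : Eu n) (hz : a ≤ ‖z‖) :
    |dBk f l z ν| ≤ (‖z‖ ^ n)⁻¹ * (|inner ℝ l ν - n * (inner ℝ l z * inner ℝ ν z) / ‖z‖ ^ 2| + C / L) := by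
  obtain ⟨q, q1, hq, hq1, e1, e2⟩ := hf.2.2.1 ‖z‖ hz
  have hz0 : 0 < ‖z‖ := by linarith
  have e3 : dBk f l z ν = (‖z‖ ^ n)⁻¹ * (q * (inner ℝ l ν - n * (inner ℝ l z * inner ℝ ν z) / ‖z‖ ^ 2)
      + q1 * ((inner ℝ l z * inner ℝ ν z) / ‖z‖ ^ 2)) := by
    have : deriv f (‖z‖ ^ 2) = (‖z‖ ^ n)⁻¹ * (- n * q + q1) / (2 * ‖z‖ ^ 2) := by
      rw [← e2]; field_simp
    unfold dBk
    rw [e1, this, real_inner_comm ν z]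
    field_simp
    ring
  rw [e3, abs_mul, abs_of_nonneg (show 0 ≤ (‖z‖ ^ n)⁻¹ by positivity)]
  gcongr
  refine (abs_add_le _ _).trans (add_le_add ?_ ?_)
  · rw [abs_mul]
    exact mul_le_of_le_one_left (abs_nonneg _) hq
  · rw [abs_mul]
    refine (mul_le_of_le_one_right (abs_nonneg _) ?_).trans hq1
    rw [abs_div, abs_mul, abs_of_pos (show 0 < ‖z‖ ^ 2 by positivity), div_le_one (by positivity)]
    have p1 := abs_real_inner_le_norm l z
    have p2 := abs_real_inner_le_norm ν z
    rw [hl, one_mul] at p1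
    rw [hν, one_mul] at p2
    rw [sq]
    gcongr

lemma layer_bound {n : ℕ} (hn : 2 ≤ n) (f : ℝ → ℝ) (C K L a : ℝ) (ha : 0 < a) (ha2 : a ≤ 1 / 2)
    (hC : 0 ≤ C / L) (hf : Prof n C K L a f)
    (l ν : Eu n) (hl : ‖l‖ = 1) (hν : ‖ν‖ = 1) (w : ℝ → ℝ≥0∞) (hw : Measurable w)
    (hw0 : ∀ s ≤ 1 / 2, w s = 0) :
    ∫⁻ z, w (inner ℝ ν z) * ENNReal.ofReal |dBk f l z ν| ≤
      (∫⁻ s, w s * ENNReal.ofReal s⁻¹) *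
        ENNReal.ofReal ((Cconst n * sphereArea n + C / L * sphereArea n) / 2) := by
  have h1 := layer_lintegral (by omega) (fun z => Ha l ν z + ENNReal.ofReal (C / L))
    ((Ha_meas l ν).add measurable_const) (fun c hc z => by simp only [Ha_hom l ν c hc z]) w hw
    (fun s hs => hw0 s (by linarith)) ν
  refine le_trans ?_ ((le_of_eq h1).trans (mul_le_mul_right (half_value hn l ν hl hν (C / L) hC) _))
  refine lintegral_mono fun z => ?_
  by_cases hs : inner ℝ ν z ≤ 1 / 2
  · simp [hw0 _ hs]
  · have p2 := (le_abs_self _).trans (abs_real_inner_le_norm ν z)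
    rw [hν, one_mul] at p2
    refine mul_le_mul_right ?_ _
    refine (ENNReal.ofReal_le_ofReal (dBk_bound f C K L a ha hf l ν hl hν z (by linarith))).trans ?_
    rw [ENNReal.ofReal_mul (by positivity), ENNReal.ofReal_add (abs_nonneg _) hC]
    exact le_rfl

/-- reflected vector -/
def reflV {n : ℕ} (ν l : Eu n) : Eu n := l - (2 * inner ℝ l ν) • ν

/-- The Green-type kernel. -/
def Ph {n : ℕ} (f : ℝ → ℝ) (ν l z : Eu n) : ℝ := Bk f l z - Bk f (reflV ν l) (z - (2 : ℝ) • ν)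

lemma reflV_norm {n : ℕ} (ν l : Eu n) (hν : ‖ν‖ = 1) (hl : ‖l‖ = 1) : ‖reflV ν l‖ = 1 := by
  have : ‖reflV ν l‖ ^ 2 = 1 := by
    unfold reflV
    rw [norm_sub_sq_real, norm_smul, inner_smul_right, hν, hl, mul_one, Real.norm_eq_abs, sq_abs]
    ring
  nlinarith [norm_nonneg (reflV ν l)]

lemma Ph_contDiff {n : ℕ} (f : ℝ → ℝ) (hf : ContDiff ℝ 3 f) (ν l : Eu n) : ContDiff ℝ 3 (Ph f ν l) := by
  unfold Ph
  exact (Bk_contDiff f hf l).sub ((Bk_contDiff f hf _).comp (contDiff_id.sub contDiff_const))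

lemma hasFDerivAt_shift {n : ℕ} (g : Eu n → ℝ) (g' : Eu n →L[ℝ] ℝ) (z b : Eu n) (h : HasFDerivAt g g' (z - b)) :
    HasFDerivAt (fun z => g (z - b)) g' z := by
  have := HasFDerivAt.comp (g := g) (f := fun z => z - b) z h ((hasFDerivAt_id z).sub_const b)
  exact this

lemma fderiv_Ph {n : ℕ} (f : ℝ → ℝ) (hf : ContDiff ℝ 3 f) (ν l z : Eu n) :
    fderiv ℝ (Ph f ν l) z = fderiv ℝ (Bk f l) z - fderiv ℝ (Bk f (reflV ν l)) (z - (2 : ℝ) • ν) := by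
  have h1 := ((Bk_contDiff f hf l).differentiable (by norm_num) z).hasFDerivAt
  have h2 := ((Bk_contDiff f hf (reflV ν l)).differentiable (by norm_num) (z - (2 : ℝ) • ν)).hasFDerivAt
  have h3 := hasFDerivAt_shift _ _ _ _ h2
  exact (h1.sub h3).fderiv

lemma lapl_Ph {n : ℕ} (f : ℝ → ℝ) (hf : ContDiff ℝ 3 f) (ν l z : Eu n) :
    lapl (Ph f ν l) z = lapl (Bk f l) z - lapl (Bk f (reflV ν l)) (z - (2 : ℝ) • ν) := by
  unfold lapl
  rw [← Finset.sum_sub_distrib]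
  refine Finset.sum_congr rfl fun i _ => ?_
  have hd : ∀ (l : Eu n), ContDiff ℝ 2 (fun z => fderiv ℝ (Bk f l) z (EuclideanSpace.single i 1)) := by
    intro l
    exact ((Bk_contDiff f hf l).fderiv_right (m := 2) (by norm_num)).clm_apply contDiff_const
  have h1 := ((hd l).differentiable (by norm_num) z).hasFDerivAt
  have h2 := ((hd (reflV ν l)).differentiable (by norm_num) (z - (2 : ℝ) • ν)).hasFDerivAt
  have h3 := hasFDerivAt_shift _ _ _ _ h2
  have h4 := (h1.sub h3).fderiv
  simp_rw [fderiv_Ph f hf ν l]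
  have := congrArg (fun T => T (EuclideanSpace.single i (1 : ℝ))) h4
  exact this

lemma Bk_zero {n : ℕ} (f : ℝ → ℝ) (L : ℝ) (hfL : ∀ s, Real.exp L ≤ s → f s = 0) (l z : Eu n)
    (hz : Real.exp (L / 2) < ‖z‖) : Bk f l z = 0 := by
  unfold Bk
  rw [hfL, mul_zero]
  have : Real.exp L = Real.exp (L / 2) ^ 2 := by rw [← Real.exp_nat_mul]; congr 1; push_cast; ring
  rw [this]; gcongr

lemma Bk_fderiv_zero {n : ℕ} (f : ℝ → ℝ) (L : ℝ) (hfL : ∀ s, Real.exp L ≤ s → f s = 0) (l z : Eu n)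
    (hz : Real.exp (L / 2) < ‖z‖) : fderiv ℝ (Bk f l) z = 0 := by
  have : Bk f l =ᶠ[𝓝 z] fun _ => 0 := by
    have ho : IsOpen {z : Eu n | Real.exp (L / 2) < ‖z‖} := isOpen_lt continuous_const continuous_norm
    filter_upwards [ho.mem_nhds hz] with y hy using Bk_zero f L hfL l y hy
  rw [this.fderiv_eq]; simp

lemma norm_refl_sq {n : ℕ} (ν z : Eu n) (hν : ‖ν‖ = 1) :
    ‖z - (2 : ℝ) • ν‖ ^ 2 = ‖z‖ ^ 2 + 4 * (1 - inner ℝ ν z) := by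
  rw [norm_sub_sq_real, norm_smul, inner_smul_right, hν, real_inner_comm]
  norm_num; ring

lemma Ph_plane {n : ℕ} (f : ℝ → ℝ) (ν l z : Eu n) (hν : ‖ν‖ = 1) (hz : inner ℝ ν z = 1) :
    Ph f ν l z = 0 := by
  have hνν : inner ℝ ν ν = (1 : ℝ) := by rw [real_inner_self_eq_norm_sq, hν]; norm_num
  unfold Ph Bk reflV
  rw [norm_refl_sq ν z hν, hz, inner_sub_left, inner_smul_left, inner_sub_right, inner_sub_right, inner_smul_right, inner_smul_right, hz, hνν]
  simp
  ring

lemma Ph_zero {n : ℕ} (f : ℝ → ℝ) (hf : ContDiff ℝ 3 f) (L : ℝ) (hfL : ∀ s, Real.exp L ≤ s → f s = 0) (ν l z : Eu n)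
    (hν : ‖ν‖ = 1) (hs : inner ℝ ν z ≤ 1)
    (hz : Real.exp (L / 2) < ‖z‖) : Ph f ν l z = 0 ∧ fderiv ℝ (Ph f ν l) z = 0 := by
  have h2 : Real.exp (L / 2) < ‖z - (2 : ℝ) • ν‖ := by
    refine hz.trans_le ?_
    have := norm_refl_sq ν z hν
    apply le_of_sq_le_sq _ (norm_nonneg _)
    nlinarith
  constructor
  · unfold Ph; rw [Bk_zero f L hfL _ _ hz, Bk_zero f L hfL _ _ h2, sub_zero]
  · rw [fderiv_Ph f hf, Bk_fderiv_zero f L hfL _ _ hz, Bk_fderiv_zero f L hfL _ _ h2, sub_zero]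

lemma Bk_compact {n : ℕ} (f : ℝ → ℝ) (L : ℝ) (hfL : ∀ s, Real.exp L ≤ s → f s = 0) (l : Eu n) :
    HasCompactSupport (Bk f l) := by
  refine HasCompactSupport.intro (isCompact_closedBall 0 (Real.exp (L / 2))) fun z hz => ?_
  exact Bk_zero f L hfL l z (by simpa using hz)

lemma Ph_compact {n : ℕ} (f : ℝ → ℝ) (L : ℝ) (hfL : ∀ s, Real.exp L ≤ s → f s = 0) (ν l : Eu n) :
    HasCompactSupport (Ph f ν l) := by
  refine HasCompactSupport.intro ((isCompact_closedBall (0 : Eu n) (Real.exp (L / 2))).union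
    (isCompact_closedBall ((2 : ℝ) • ν) (Real.exp (L / 2)))) fun z hz => ?_
  simp only [mem_union, mem_closedBall, dist_eq_norm, sub_zero, not_or, not_le] at hz
  unfold Ph; rw [Bk_zero f L hfL _ _ hz.1, Bk_zero f L hfL _ _ hz.2, sub_zero]

lemma Ph_lip {n : ℕ} (f : ℝ → ℝ) (hf : ContDiff ℝ 3 f) (L : ℝ) (hfL : ∀ s, Real.exp L ≤ s → f s = 0) (ν l : Eu n)
    (hν : ‖ν‖ = 1) : ∃ Λ : ℝ, 0 ≤ Λ ∧ ∀ z, |Ph f ν l z| ≤ Λ * |1 - inner ℝ ν z| := by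
  obtain ⟨Λ, hΛ⟩ := ContDiff.lipschitzWith_of_hasCompactSupport (Ph_compact f L hfL ν l) (Ph_contDiff f hf ν l) (by norm_num)
  refine ⟨Λ, Λ.2, fun z => ?_⟩
  have h := hΛ.dist_le_mul z (z + (1 - inner ℝ ν z) • ν)
  rw [Ph_plane f ν l (z + (1 - inner ℝ ν z) • ν) hν (by
    rw [inner_add_right, inner_smul_right, real_inner_self_eq_norm_sq, hν]; ring)] at h
  rw [dist_eq_norm, dist_eq_norm] at h
  simpa [norm_smul, hν] using h

lemma lapl_cont {n : ℕ} (g : Eu n → ℝ) (hg : ContDiff ℝ 2 g) : Continuous (lapl g) := by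
  unfold lapl
  refine continuous_finsetSum _ fun i _ => ?_
  have : ContDiff ℝ 1 (fun z => fderiv ℝ g z (EuclideanSpace.single i 1)) :=
    (hg.fderiv_right (m := 1) (by norm_num)).clm_apply contDiff_const
  have := this.continuous_fderiv (by norm_num)
  fun_prop

lemma lapl_compact {n : ℕ} (g : Eu n → ℝ) (hg : HasCompactSupport g) : HasCompactSupport (lapl g) := by
  have h0 : ∀ z ∉ tsupport g, lapl g z = 0 := by
    intro z hz
    unfold lapl
    refine Finset.sum_eq_zero fun i _ => ?_
    have h1 : (fun y => fderiv ℝ g y (EuclideanSpace.single i 1)) =ᶠ[𝓝 z] fun _ => 0 := by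
      filter_upwards [(isClosed_tsupport g).isOpen_compl.mem_nhds hz] with y hy
      have : fderiv ℝ g y = 0 := by
        by_contra hne
        exact hy (support_fderiv_subset ℝ hne)
      simp [this]
    rw [h1.fderiv_eq]; simp
  exact HasCompactSupport.intro hg h0

end

section
open Set Topology ENNReal

/-- The cutoff near the plane. -/
def kap (η s : ℝ) : ℝ := Real.smoothTransition ((1 - s) / η)

lemma kap_contDiff (η : ℝ) : ContDiff ℝ 2 (kap η) := by
  unfold kap
  exact (TT_smooth.of_le (by norm_num)).comp ((contDiff_const.sub contDiff_id).div_const η)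

lemma kap_deriv (η s : ℝ) : deriv (kap η) s = - (deriv Real.smoothTransition ((1 - s) / η) / η) := by
  have h1 : HasDerivAt Real.smoothTransition (deriv Real.smoothTransition ((1 - s) / η)) ((1 - s) / η) :=
    (TT_smooth.differentiable (by norm_num) _).hasDerivAt
  have h2 : HasDerivAt (fun s : ℝ => (1 - s) / η) (-1 / η) s :=
    ((hasDerivAt_id s).const_sub 1).div_const η
  have h3 : HasDerivAt (kap η) _ s := HasDerivAt.comp (h₂ := Real.smoothTransition) (h := fun s : ℝ => (1 - s) / η) s h1 h2
  rw [h3.deriv]; ring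

lemma kap_deriv_nonpos (η s : ℝ) (hη : 0 < η) : deriv (kap η) s ≤ 0 := by
  rw [kap_deriv]
  have := TT_d1_nonneg ((1 - s) / η)
  have : 0 ≤ deriv Real.smoothTransition ((1 - s) / η) / η := by positivity
  linarith

lemma kap_deriv_zero (η s : ℝ) (hη : 0 < η) (hs : s ≤ 1 - η ∨ 1 ≤ s) : deriv (kap η) s = 0 := by
  rw [kap_deriv, TT_d1_zero, zero_div, neg_zero]
  rcases hs with h | h
  · right; rw [le_div_iff₀ hη]; linarith
  · left; exact div_nonpos_of_nonpos_of_nonneg (by linarith) hη.le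

lemma kap_one (η s : ℝ) (hη : 0 < η) (hs : s ≤ 1 - η) : kap η s = 1 := by
  unfold kap
  apply Real.smoothTransition.one_of_one_le
  rw [le_div_iff₀ hη]; linarith

lemma kap_zero (η s : ℝ) (hη : 0 < η) (hs : 1 ≤ s) : kap η s = 0 := by
  unfold kap
  apply Real.smoothTransition.zero_of_nonpos
  exact div_nonpos_of_nonpos_of_nonneg (by linarith) hη.le

lemma kap_abs (η s : ℝ) : |kap η s| ≤ 1 := by
  unfold kap
  rw [abs_of_nonneg (Real.smoothTransition.nonneg _)]
  exact Real.smoothTransition.le_one _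

lemma kap_lin (A : ℝ) (hA : ∀ x, |x * deriv Real.smoothTransition x| ≤ A) (η s : ℝ) (hη : 0 < η) :
    |deriv (kap η) s| * |1 - s| ≤ A := by
  rw [kap_deriv, ← abs_mul, ← abs_neg]
  refine le_trans (le_of_eq ?_) (hA ((1 - s) / η))
  congr 1; field_simp

lemma kap_deriv_cont (η : ℝ) : Continuous (deriv (kap η)) := (kap_contDiff η).continuous_deriv (by norm_num)

lemma kap_lint (η : ℝ) (hη : 0 < η) : ∫⁻ s, ENNReal.ofReal |deriv (kap η) s| = 1 := by
  have hsupp : Function.support (deriv (kap η)) ⊆ Ioc (1 - η) 1 := by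
    intro s hs
    by_contra h
    apply hs
    apply kap_deriv_zero η s hη
    simp only [mem_Ioc, not_and_or, not_lt, not_le] at h
    rcases h with h | h
    · exact Or.inl h
    · exact Or.inr h.le
  have hcs : HasCompactSupport (deriv (kap η)) :=
    HasCompactSupport.intro (isCompact_Icc (a := 1 - η) (b := 1)) fun s hs => by
      by_contra h
      exact hs (Ioc_subset_Icc_self (hsupp h))
  have hIntg : Integrable (deriv (kap η)) := (kap_deriv_cont η).integrable_of_hasCompactSupport hcs
  rw [← ofReal_integral_eq_lintegral_ofReal hIntg.abs (ae_of_all _ fun _ => abs_nonneg _)]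
  have h1 : ∫ s, |deriv (kap η) s| = 1 := by
    have : ∀ s, |deriv (kap η) s| = - deriv (kap η) s := fun s => abs_of_nonpos (kap_deriv_nonpos η s hη)
    simp_rw [this]
    rw [integral_neg, ← intervalIntegral.integral_eq_integral_of_support_subset hsupp,
      intervalIntegral.integral_deriv_eq_sub (fun s _ => (kap_contDiff η).differentiable (by norm_num) s)
        ((kap_deriv_cont η).intervalIntegrable _ _), kap_one η (1 - η) hη le_rfl, kap_zero η 1 hη le_rfl]
    norm_num
  rw [h1, ENNReal.ofReal_one]

lemma layer_one {n : ℕ} (hn : 2 ≤ n) (f : ℝ → ℝ) (C K L a : ℝ) (ha : 0 < a) (ha2 : a ≤ 1 / 2)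
    (hC : 0 ≤ C / L) (hf : Prof n C K L a f)
    (l ν : Eu n) (hl : ‖l‖ = 1) (hν : ‖ν‖ = 1) (η : ℝ) (hη : 0 < η) (hη2 : η ≤ 1 / 2) :
    ∫⁻ z, ENNReal.ofReal |deriv (kap η) (inner ℝ ν z)| * ENNReal.ofReal |dBk f l z ν| ≤
      ENNReal.ofReal (1 - η)⁻¹ *
        ENNReal.ofReal ((Cconst n * sphereArea n + C / L * sphereArea n) / 2) := by
  have hm := (kap_deriv_cont η).measurable
  refine (layer_bound hn f C K L a ha ha2 hC hf l ν hl hν (fun s => ENNReal.ofReal |deriv (kap η) s|)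
    (by fun_prop) (fun s hs => by simp [kap_deriv_zero η s hη (Or.inl (by linarith))])).trans ?_
  refine mul_le_mul_left ?_ _
  calc ∫⁻ s, ENNReal.ofReal |deriv (kap η) s| * ENNReal.ofReal s⁻¹
      ≤ ∫⁻ s, ENNReal.ofReal |deriv (kap η) s| * ENNReal.ofReal (1 - η)⁻¹ := by
        refine lintegral_mono fun s => ?_
        by_cases hs : s ≤ 1 - η
        · simp [kap_deriv_zero η s hη (Or.inl hs)]
        · have : s⁻¹ ≤ (1 - η)⁻¹ := inv_anti₀ (by linarith) (by linarith)
          gcongr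
    _ = ENNReal.ofReal (1 - η)⁻¹ := by
        rw [lintegral_mul_const _ (by fun_prop), kap_lint η hη, one_mul]

lemma layer_two {n : ℕ} (hn : 2 ≤ n) (f : ℝ → ℝ) (C K L a : ℝ) (ha : 0 < a) (ha2 : a ≤ 1 / 2)
    (hC : 0 ≤ C / L) (hf : Prof n C K L a f)
    (l ν : Eu n) (hl : ‖l‖ = 1) (hν : ‖ν‖ = 1) (η : ℝ) (hη : 0 < η) (hη2 : η ≤ 1 / 2) :
    ∫⁻ z, ENNReal.ofReal |deriv (kap η) (inner ℝ ν z)| * ENNReal.ofReal |dBk f l (z - (2 : ℝ) • ν) ν| ≤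
      ENNReal.ofReal ((Cconst n * sphereArea n + C / L * sphereArea n) / 2) := by
  have hm := (kap_deriv_cont η).measurable
  have hνν : inner ℝ ν ν = (1 : ℝ) := by rw [real_inner_self_eq_norm_sq, hν]; norm_num
  rw [← lintegral_sub_left_eq_self _ ((2 : ℝ) • ν)]
  have he : ∀ z : Eu n, ENNReal.ofReal |deriv (kap η) (inner ℝ ν ((2 : ℝ) • ν - z))| * ENNReal.ofReal |dBk f l ((2 : ℝ) • ν - z - (2 : ℝ) • ν) ν|
      = ENNReal.ofReal |deriv (kap η) (2 - inner ℝ ν z)| * ENNReal.ofReal |dBk f l z ν| := by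
    intro z
    have e1 : (2 : ℝ) • ν - z - (2 : ℝ) • ν = - z := by abel
    rw [e1, inner_sub_right, inner_smul_right, hνν]
    simp [dBk]
  simp_rw [he]
  refine (layer_bound hn f C K L a ha ha2 hC hf l ν hl hν (fun s => ENNReal.ofReal |deriv (kap η) (2 - s)|)
    (by fun_prop) (fun s hs => by simp [kap_deriv_zero η (2 - s) hη (Or.inr (by linarith))])).trans ?_
  refine mul_le_of_le_one_left (by positivity) ?_
  calc ∫⁻ s, ENNReal.ofReal |deriv (kap η) (2 - s)| * ENNReal.ofReal s⁻¹
      ≤ ∫⁻ s, ENNReal.ofReal |deriv (kap η) (2 - s)| := by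
        refine lintegral_mono fun s => ?_
        by_cases hs : s ≤ 1
        · simp [kap_deriv_zero η (2 - s) hη (Or.inr (by linarith))]
        · have : s⁻¹ ≤ 1 := inv_le_one_of_one_le₀ (by linarith)
          refine mul_le_of_le_one_right (by positivity) ?_
          simpa using this
    _ = 1 := by
        rw [lintegral_sub_left_eq_self (fun s => ENNReal.ofReal |deriv (kap η) s|) 2, kap_lint η hη]

end

section
open Set Topology ENNReal

/-- The region on which harmonicity is needed. -/
def Kreg {n : ℕ} (L : ℝ) (ν : Eu n) : Set (Eu n) := {z | inner ℝ ν z ≤ 1 ∧ ‖z‖ ≤ Real.exp (L / 2)}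

lemma Kreg_compact {n : ℕ} (L : ℝ) (ν : Eu n) : IsCompact (Kreg L ν) := by
  have h : Kreg L ν = {z | inner ℝ ν z ≤ 1} ∩ closedBall (0 : Eu n) (Real.exp (L / 2)) := by
    ext z; simp [Kreg]
  rw [h]
  exact (isCompact_closedBall _ _).inter_left (isClosed_le (by fun_prop) continuous_const)

lemma first_term {n : ℕ} (hn : 2 ≤ n) (f : ℝ → ℝ) (C K L a : ℝ) (ha : 0 < a) (ha2 : a ≤ 1 / 2)
    (hC : 0 ≤ C / L) (hf : Prof n C K L a f)
    (l ν : Eu n) (hl : ‖l‖ = 1) (hν : ‖ν‖ = 1) (η : ℝ) (hη : 0 < η) (hη2 : η ≤ 1 / 2)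
    (v : Eu n → ℝ) (hv1 : ∀ z, |v z| ≤ 1) (hQ : 0 ≤ Cconst n * sphereArea n + C / L * sphereArea n) :
    |∫ z, deriv (kap η) (inner ℝ ν z) * (v z * fderiv ℝ (Ph f ν l) z ν)| ≤
      (1 - η)⁻¹ * (Cconst n * sphereArea n + C / L * sphereArea n) := by
  set Q := Cconst n * sphereArea n + C / L * sphereArea n with hQd
  have h1 := layer_one hn f C K L a ha ha2 hC hf l ν hl hν η hη hη2
  have h2 := layer_two hn f C K L a ha ha2 hC hf (reflV ν l) ν (reflV_norm ν l hν hl) hν η hη hη2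
  rw [← hQd] at h1 h2
  have hfc : ContDiff ℝ 3 f := hf.1
  have hm := (kap_deriv_cont η).measurable
  have hmd : ∀ l : Eu n, Measurable (fun z => dBk f l z ν) := by
    intro l
    have e1 := hfc.continuous
    have e2 := (prof_d1 f hfc).continuous
    unfold dBk
    apply Continuous.measurable
    fun_prop
  have hη1 : 1 ≤ (1 - η)⁻¹ := (one_le_inv₀ (by linarith)).2 (by linarith)
  have hp : 0 ≤ (1 - η)⁻¹ * Q := by positivity
  have h3 : ∫⁻ z, ENNReal.ofReal ‖deriv (kap η) (inner ℝ ν z) * (v z * fderiv ℝ (Ph f ν l) z ν)‖ ≤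
      ENNReal.ofReal ((1 - η)⁻¹ * Q) := by
    calc _ ≤ ∫⁻ z, (ENNReal.ofReal |deriv (kap η) (inner ℝ ν z)| * ENNReal.ofReal |dBk f l z ν| +
          ENNReal.ofReal |deriv (kap η) (inner ℝ ν z)| * ENNReal.ofReal |dBk f (reflV ν l) (z - (2 : ℝ) • ν) ν|) := by
          refine lintegral_mono fun z => ?_
          rw [← mul_add, ← ENNReal.ofReal_add (abs_nonneg _) (abs_nonneg _), ← ENNReal.ofReal_mul (abs_nonneg _)]
          apply ENNReal.ofReal_le_ofReal
          rw [Real.norm_eq_abs, abs_mul, abs_mul, fderiv_Ph f hfc]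
          simp only [sub_apply]
          rw [fderiv_Bk f hfc, fderiv_Bk f hfc]
          gcongr
          exact (mul_le_of_le_one_left (abs_nonneg _) (hv1 z)).trans (abs_sub _ _)
      _ ≤ ENNReal.ofReal (1 - η)⁻¹ * ENNReal.ofReal (Q / 2) + ENNReal.ofReal (Q / 2) := by
          rw [lintegral_add_left]
          · exact add_le_add h1 h2
          · have := hmd l
            fun_prop
      _ ≤ ENNReal.ofReal ((1 - η)⁻¹ * Q) := by
          rw [← ENNReal.ofReal_mul (by positivity), ← ENNReal.ofReal_add (by positivity) (by positivity)]
          apply ENNReal.ofReal_le_ofReal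
          nlinarith
  have h4 := norm_integral_le_lintegral_norm (μ := (volume : Measure (Eu n)))
    (fun z => deriv (kap η) (inner ℝ ν z) * (v z * fderiv ℝ (Ph f ν l) z ν))
  rw [Real.norm_eq_abs] at h4
  refine h4.trans ?_
  exact ENNReal.toReal_le_of_le_ofReal hp h3

lemma core1 {n : ℕ} (hn : 2 ≤ n) (f : ℝ → ℝ) (C K L a : ℝ) (ha : 0 < a) (ha2 : a ≤ 1 / 2)
    (hC : 0 ≤ C / L) (hf : Prof n C K L a f)
    (l ν : Eu n) (hl : ‖l‖ = 1) (hν : ‖ν‖ = 1)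
    (v : Eu n → ℝ) (hv : ContDiff ℝ 2 v) (hv1 : ∀ z, |v z| ≤ 1)
    (hlap : ∀ z ∈ Kreg L ν, lapl v z = 0) (hQ : 0 ≤ Cconst n * sphereArea n + C / L * sphereArea n) :
    |∫ z in {z : Eu n | inner ℝ ν z < 1}, v z * lapl (Ph f ν l) z| ≤
      Cconst n * sphereArea n + C / L * sphereArea n := by
  set Q := Cconst n * sphereArea n + C / L * sphereArea n with hQd
  have hfc : ContDiff ℝ 3 f := hf.1
  set Φ := Ph f ν l with hΦd
  have hΦ : ContDiff ℝ 2 Φ := (Ph_contDiff f hfc ν l).of_le (by norm_num)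
  have hΦc : HasCompactSupport Φ := Ph_compact f L hf.2.1 ν l
  have hK := Kreg_compact L ν
  have hoff : ∀ z ∉ Kreg L ν, 1 < inner ℝ ν z ∨ (Φ z = 0 ∧ fderiv ℝ Φ z = 0) := by
    intro z hz
    by_cases hs : 1 < inner ℝ ν z
    · exact Or.inl hs
    · right
      apply Ph_zero f hfc L hf.2.1 ν l z hν (not_lt.1 hs)
      by_contra h
      exact hz ⟨not_lt.1 hs, not_lt.1 h⟩
  obtain ⟨Λ, hΛ, hlip⟩ := Ph_lip f hfc L hf.2.1 ν l hν
  obtain ⟨A, hA, hT⟩ := TT_bound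
  have hvd : Continuous (fun z => fderiv ℝ v z ν) := by
    have := hv.continuous_fderiv (by norm_num)
    fun_prop
  have hΦd' : Continuous (fun z => fderiv ℝ Φ z ν) := by
    have := hΦ.continuous_fderiv (by norm_num)
    fun_prop
  have hΦcont := hΦ.continuous
  have hvc := hv.continuous
  have hlΦ := lapl_cont Φ hΦ
  have hlΦc := lapl_compact Φ hΦc
  set η : ℕ → ℝ := fun k => 1 / ((k : ℝ) + 2) with hη
  have hη0 : ∀ k, 0 < η k := fun k => by positivity
  have hη2 : ∀ k, η k ≤ 1 / 2 := fun k => by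
    simp only [hη]
    apply one_div_le_one_div_of_le (by norm_num)
    have : (0 : ℝ) ≤ k := Nat.cast_nonneg k
    linarith
  have hηlim : Tendsto η atTop (𝓝 0) := by
    have h := tendsto_one_div_add_atTop_nhds_zero_nat (𝕜 := ℝ)
    have h' := (tendsto_add_atTop_iff_nat (f := fun n : ℕ => 1 / ((n : ℝ) + 1)) 1).2 h
    refine h'.congr fun k => ?_
    simp only [hη]; push_cast; congr 1; ring
  have hev : ∀ z : Eu n, ∀ᶠ k in atTop, inner ℝ ν z ≤ 1 - η k ∨ 1 ≤ inner ℝ ν z := by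
    intro z
    by_cases hs : 1 ≤ inner ℝ ν z
    · exact Eventually.of_forall fun _ => Or.inr hs
    · have : 0 < 1 - inner ℝ ν z := by linarith
      filter_upwards [hηlim.eventually (gt_mem_nhds this)] with k hk
      left; linarith
  set T2 : ℕ → Eu n → ℝ := fun k z => deriv (kap (η k)) (inner ℝ ν z) * (Φ z * fderiv ℝ v z ν) with hT2
  set T3 : ℕ → Eu n → ℝ := fun k z => kap (η k) (inner ℝ ν z) * (v z * lapl Φ z) with hT3
  set T1 : ℕ → Eu n → ℝ := fun k z => deriv (kap (η k)) (inner ℝ ν z) * (v z * fderiv ℝ Φ z ν) with hT1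
  have hkd := fun k => kap_deriv_cont (η k)
  have hkc := fun k => (kap_contDiff (η k)).continuous
  have c1 : ∀ k, Continuous (T1 k) := fun k => by
    have := hkd k
    simp only [hT1]; fun_prop
  have c2 : ∀ k, Continuous (T2 k) := fun k => by
    have := hkd k
    simp only [hT2]; fun_prop
  have c3 : ∀ k, Continuous (T3 k) := fun k => by
    have := hkc k
    simp only [hT3]; fun_prop
  have z12 : ∀ k, ∀ z ∉ Kreg L ν, T1 k z = 0 ∧ T2 k z = 0 := by
    intro k z hz
    rcases hoff z hz with h | ⟨h1, h2⟩
    · have := kap_deriv_zero (η k) (inner ℝ ν z) (hη0 k) (Or.inr h.le)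
      simp [hT1, hT2, this]
    · simp [hT1, hT2, h1, h2]
  have i1 : ∀ k, Integrable (T1 k) := fun k =>
    (c1 k).integrable_of_hasCompactSupport (HasCompactSupport.intro hK fun z hz => (z12 k z hz).1)
  have i2 : ∀ k, Integrable (T2 k) := fun k =>
    (c2 k).integrable_of_hasCompactSupport (HasCompactSupport.intro hK fun z hz => (z12 k z hz).2)
  have hvl : Integrable (fun z => v z * lapl Φ z) :=
    (hvc.mul hlΦ).integrable_of_hasCompactSupport hlΦc.mul_left
  have i3 : ∀ k, Integrable (T3 k) := fun k =>
    (c3 k).integrable_of_hasCompactSupport (hlΦc.mul_left.mul_left)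
  have hg : ∀ k, ∫ z, T3 k z = (∫ z, T2 k z) - ∫ z, T1 k z := by
    intro k
    have h := green v Φ (kap (η k)) ν hv hΦ (kap_contDiff _) (Kreg L ν) hK (fun z hz => by
      rcases hoff z hz with h | h
      · exact Or.inl (kap_zero _ _ (hη0 k) h.le)
      · exact Or.inr h)
    have h' : ∫ z, ((T1 k z - T2 k z) + T3 k z) = 0 := by
      rw [← h]
      congr 1
      ext z
      have hz : kap (η k) (inner ℝ ν z) * (Φ z * lapl v z) = 0 := by
        by_cases hz : z ∈ Kreg L ν
        · simp [hlap z hz]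
        · rcases hoff z hz with h | h
          · simp [kap_zero _ _ (hη0 k) h.le]
          · simp [h.1]
      simp only [hT1, hT2, hT3]
      linear_combination hz
    have e1 := integral_add (((i1 k).sub (i2 k))) (i3 k)
    have e2 := integral_sub (i1 k) (i2 k)
    simp only [Pi.sub_apply] at e1
    rw [h', e2] at e1
    linarith
  obtain ⟨D, hD⟩ := hK.exists_bound_of_continuousOn hvd.continuousOn
  have l2 : Tendsto (fun k => ∫ z, T2 k z) atTop (𝓝 0) := by
    rw [show (0 : ℝ) = ∫ z : Eu n, (0 : ℝ) by simp]
    refine tendsto_integral_of_dominated_convergence ((Kreg L ν).indicator fun _ => Λ * A * |D|)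
      (fun k => (c2 k).aestronglyMeasurable) ?_ ?_ ?_
    · exact (integrable_indicator_iff hK.measurableSet).2 (integrableOn_const hK.measure_lt_top.ne)
    · intro k
      refine ae_of_all _ fun z => ?_
      by_cases hz : z ∈ Kreg L ν
      · rw [indicator_of_mem hz]
        have q1 := kap_lin A (fun x => (hT x).2.2) (η k) (inner ℝ ν z) (hη0 k)
        have q2 := hlip z
        have q3 := (hD z hz).trans (le_abs_self D)
        simp only [hT2]
        rw [norm_mul, norm_mul, Real.norm_eq_abs, Real.norm_eq_abs]
        calc _ ≤ |deriv (kap (η k)) (inner ℝ ν z)| * (Λ * |1 - inner ℝ ν z| * |D|) := by gcongr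
          _ = Λ * (|deriv (kap (η k)) (inner ℝ ν z)| * |1 - inner ℝ ν z|) * |D| := by ring
          _ ≤ _ := by gcongr
      · rw [indicator_of_notMem hz, (z12 k z hz).2]; simp
    · refine ae_of_all _ fun z => ?_
      refine tendsto_const_nhds.congr' ?_
      filter_upwards [hev z] with k hk
      simp [hT2, kap_deriv_zero _ _ (hη0 k) hk]
  have hms : MeasurableSet {z : Eu n | inner ℝ ν z < 1} := measurableSet_lt (by fun_prop) measurable_const
  have l3 : Tendsto (fun k => ∫ z, T3 k z) atTop (𝓝 (∫ z in {z : Eu n | inner ℝ ν z < 1}, v z * lapl Φ z)) := by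
    rw [← integral_indicator hms]
    refine tendsto_integral_of_dominated_convergence (fun z => |v z * lapl Φ z|)
      (fun k => (c3 k).aestronglyMeasurable) hvl.abs ?_ ?_
    · intro k
      refine ae_of_all _ fun z => ?_
      simp only [hT3]
      rw [Real.norm_eq_abs, abs_mul]
      exact mul_le_of_le_one_left (abs_nonneg _) (kap_abs _ _)
    · refine ae_of_all _ fun z => ?_
      refine tendsto_const_nhds.congr' ?_
      by_cases hs : inner ℝ ν z < 1
      · filter_upwards [hev z] with k hk
        have hk' := hk.resolve_right (not_le.2 hs)
        simp [hT3, kap_one _ _ (hη0 k) hk', hs]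
      · filter_upwards with k
        simp [hT3, kap_zero _ _ (hη0 k) (not_lt.1 hs), hs]
  have l1 : Tendsto (fun k => (1 - η k)⁻¹ * Q + |∫ z, T2 k z|) atTop (𝓝 Q) := by
    have := (((tendsto_const_nhds (x := (1 : ℝ))).sub hηlim).inv₀ (by norm_num)).mul_const Q |>.add l2.abs
    simpa using this
  refine le_of_tendsto_of_tendsto' l3.abs l1 fun k => ?_
  rw [hg k]
  have := first_term hn f C K L a ha ha2 hC hf l ν hl hν (η k) (hη0 k) (hη2 k) v hv1 hQ
  refine (abs_sub _ _).trans ?_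
  rw [add_comm]
  gcongr

end

section
open Set Topology ENNReal

/-- An integrable majorant. -/
def Gm {n : ℕ} (z : Eu n) : ℝ := 2 ^ (n + 1) * (1 + ‖z‖) ^ (-((n : ℝ) + 1))

lemma Gm_nonneg {n : ℕ} (z : Eu n) : 0 ≤ Gm z := by unfold Gm; positivity

lemma Gm_int {n : ℕ} : Integrable (Gm : Eu n → ℝ) := by
  unfold Gm
  exact (integrable_one_add_norm (by simp)).const_mul _

lemma Gm_ge {n : ℕ} (z : Eu n) (hz : 1 ≤ ‖z‖) : (‖z‖ ^ (n + 1))⁻¹ ≤ Gm z := by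
  unfold Gm
  rw [Real.rpow_neg (by positivity), show ((n : ℝ) + 1) = ((n + 1 : ℕ) : ℝ) by push_cast; rfl, Real.rpow_natCast,
    ← div_eq_mul_inv, ← inv_div, ← div_pow]
  apply inv_anti₀ (by positivity)
  gcongr
  linarith

lemma far_bound {n : ℕ} (f : ℝ → ℝ) (C K L a : ℝ) (hC : 0 ≤ C / L) (hf : Prof n C K L a f)
    (l : Eu n) (hl : ‖l‖ = 1) (z : Eu n) (hz : a ≤ ‖z‖) :
    |lapl (Bk f l) z| ≤ C / L * Gm z := by
  rw [lapl_Bk f hf.1]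
  by_cases h1 : 1 ≤ ‖z‖
  · have p1 := abs_real_inner_le_norm l z
    rw [hl, one_mul] at p1
    rw [abs_mul]
    calc _ ≤ ‖z‖ * (C / L * (‖z‖ ^ (n + 2))⁻¹) := by
          gcongr
          exact hf.2.2.2.1 _ h1
      _ = C / L * (‖z‖ ^ (n + 1))⁻¹ := by field_simp; ring
      _ ≤ _ := by gcongr; exact Gm_ge z h1
  · rw [hf.2.2.2.2.1 _ hz (not_le.1 h1).le]
    simp only [mul_zero, abs_zero]
    exact mul_nonneg hC (Gm_nonneg z)

lemma core2 {n : ℕ} (hn : 2 ≤ n) (f : ℝ → ℝ) (C K L a : ℝ) (ha : 0 < a) (ha2 : a ≤ 1 / 2)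
    (hC : 0 ≤ C / L) (hf : Prof n C K L a f)
    (l ν : Eu n) (hl : ‖l‖ = 1) (hν : ‖ν‖ = 1)
    (v : Eu n → ℝ) (hv : ContDiff ℝ 2 v) (hv1 : ∀ z, |v z| ≤ 1)
    (hlap : ∀ z ∈ Kreg L ν, lapl v z = 0) (hQ : 0 ≤ Cconst n * sphereArea n + C / L * sphereArea n) :
    |∫ z in ball (0 : Eu n) a, v z * lapl (Bk f l) z| ≤
      Cconst n * sphereArea n + C / L * (sphereArea n + 2 * ∫ z : Eu n, Gm z) := by
  have h1 := core1 hn f C K L a ha ha2 hC hf l ν hl hν v hv hv1 hlap hQ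
  have hfc : ContDiff ℝ 3 f := hf.1
  have hms : MeasurableSet {z : Eu n | inner ℝ ν z < 1} := measurableSet_lt (by fun_prop) measurable_const
  have hΦ : ContDiff ℝ 2 (Ph f ν l) := (Ph_contDiff f hfc ν l).of_le (by norm_num)
  have hvl : Integrable (fun z => v z * lapl (Ph f ν l) z) :=
    (hv.continuous.mul (lapl_cont _ hΦ)).integrable_of_hasCompactSupport
      (lapl_compact _ (Ph_compact f L hf.2.1 ν l)).mul_left
  have hvb : Integrable (fun z => v z * lapl (Bk f l) z) :=
    (hv.continuous.mul (lapl_cont _ ((Bk_contDiff f hfc l).of_le (by norm_num)))).integrable_of_hasCompactSupport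
      (lapl_compact _ (Bk_compact f L hf.2.1 l)).mul_left
  have hGs : Integrable (fun z : Eu n => Gm (z - (2 : ℝ) • ν)) := Gm_int.comp_sub_right _
  rw [← integral_indicator hms] at h1
  rw [← integral_indicator measurableSet_ball]
  have iA := hvl.indicator hms
  have iB := hvb.indicator (measurableSet_ball (x := (0 : Eu n)) (ε := a))
  have hdiff : |(∫ z, (ball (0 : Eu n) a).indicator (fun z => v z * lapl (Bk f l) z) z) -
      ∫ z, {z : Eu n | inner ℝ ν z < 1}.indicator (fun z => v z * lapl (Ph f ν l) z) z| ≤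
      C / L * (2 * ∫ z : Eu n, Gm z) := by
    rw [← integral_sub iB iA, ← Real.norm_eq_abs]
    have hI : ∫ z : Eu n, C / L * (Gm z + Gm (z - (2 : ℝ) • ν)) = C / L * (2 * ∫ z : Eu n, Gm z) := by
      rw [integral_const_mul, integral_add Gm_int hGs, integral_sub_right_eq_self (fun z => Gm z)]
      ring
    rw [← hI]
    refine norm_integral_le_of_norm_le ((Gm_int.add hGs).const_mul _) (ae_of_all _ fun z => ?_)
    rw [Real.norm_eq_abs]
    have g1 := mul_nonneg hC (Gm_nonneg z)
    have g2 := mul_nonneg hC (Gm_nonneg (z - (2 : ℝ) • ν))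
    have p2 := (le_abs_self _).trans (abs_real_inner_le_norm ν z)
    rw [hν, one_mul] at p2
    by_cases hs : inner ℝ ν z < 1
    · rw [indicator_of_mem (show z ∈ {z : Eu n | inner ℝ ν z < 1} from hs), lapl_Ph f hfc]
      have hr : 1 ≤ ‖z - (2 : ℝ) • ν‖ := by
        have e1 := norm_refl_sq ν z hν
        have : (1 : ℝ) ^ 2 ≤ ‖z - (2 : ℝ) • ν‖ ^ 2 := by
          have hi := (abs_le.1 (abs_real_inner_le_norm ν z)).2
          rw [hν, one_mul] at hi
          by_cases h0 : inner ℝ ν z ≤ 0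
          · nlinarith [sq_nonneg ‖z‖]
          · nlinarith [sq_nonneg (inner ℝ ν z - 2)]
        exact le_of_sq_le_sq this (norm_nonneg _)
      have b2 := far_bound f C K L a hC hf (reflV ν l) (reflV_norm ν l hν hl) (z - (2 : ℝ) • ν) (by linarith)
      have b2' : |v z * lapl (Bk f (reflV ν l)) (z - (2 : ℝ) • ν)| ≤ C / L * Gm (z - (2 : ℝ) • ν) := by
        rw [abs_mul]
        exact (mul_le_of_le_one_left (abs_nonneg _) (hv1 z)).trans b2
      by_cases hz : z ∈ ball (0 : Eu n) a
      · rw [indicator_of_mem hz]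
        rw [show v z * lapl (Bk f l) z - v z * (lapl (Bk f l) z - lapl (Bk f (reflV ν l)) (z - (2 : ℝ) • ν))
          = v z * lapl (Bk f (reflV ν l)) (z - (2 : ℝ) • ν) by ring]
        linarith
      · rw [indicator_of_notMem hz]
        have hz' : a ≤ ‖z‖ := by simpa using hz
        have b1 := far_bound f C K L a hC hf l hl z hz'
        have b1' : |v z * lapl (Bk f l) z| ≤ C / L * Gm z := by
          rw [abs_mul]
          exact (mul_le_of_le_one_left (abs_nonneg _) (hv1 z)).trans b1
        rw [show 0 - v z * (lapl (Bk f l) z - lapl (Bk f (reflV ν l)) (z - (2 : ℝ) • ν))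
          = v z * lapl (Bk f (reflV ν l)) (z - (2 : ℝ) • ν) - v z * lapl (Bk f l) z by ring]
        have := abs_sub (v z * lapl (Bk f (reflV ν l)) (z - (2 : ℝ) • ν)) (v z * lapl (Bk f l) z)
        linarith
    · rw [indicator_of_notMem (show z ∉ {z : Eu n | inner ℝ ν z < 1} from hs), indicator_of_notMem (by
        simp only [mem_ball_zero_iff]; linarith)]
      simp
      linarith
  have h3 := abs_sub_abs_le_abs_sub (∫ z, (ball (0 : Eu n) a).indicator (fun z => v z * lapl (Bk f l) z) z)
      (∫ z, {z : Eu n | inner ℝ ν z < 1}.indicator (fun z => v z * lapl (Ph f ν l) z) z)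
  linarith

lemma near_bound {n : ℕ} (hn : 2 ≤ n) (f : ℝ → ℝ) (C K L a : ℝ) (ha : 0 < a) (hK : 0 ≤ K)
    (hf : Prof n C K L a f) (l : Eu n) (hl : ‖l‖ = 1)
    (v : Eu n → ℝ) (hv : ContDiff ℝ 2 v) (ε : ℝ) (hε : 0 ≤ ε)
    (hd : ∀ z ∈ ball (0 : Eu n) a, |v z - v 0 - fderiv ℝ v 0 z| ≤ ε * ‖z‖) :
    |(∫ z in ball (0 : Eu n) a, v z * lapl (Bk f l) z) + sphereArea n * fderiv ℝ v 0 l| ≤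
      ε * (K * (volume : Measure (Eu n)).real (ball 0 1)) := by
  have hfc : ContDiff ℝ 3 f := hf.1
  have hIntg : ∀ F : Eu n → ℝ, Continuous F → IntegrableOn F (ball 0 a) := fun F hF =>
    (hF.continuousOn.integrableOn_compact (isCompact_closedBall 0 a)).mono_set ball_subset_closedBall
  set g : Eu n := (InnerProductSpace.toDual ℝ (Eu n)).symm (fderiv ℝ v 0) with hg
  have hgi : ∀ z, inner ℝ g z = fderiv ℝ v 0 z := fun z => by
    rw [hg, InnerProductSpace.toDual_symm_apply]
  have hvc := hv.continuous
  have hmc := mfun_cont n f hfc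
  have e1 := near_value (by omega) f hfc a ha hf.2.2.2.2.2.1 g l
  have e2 : ∫ z in ball (0 : Eu n) a, v 0 * (inner ℝ l z * mfun n f (‖z‖ ^ 2)) = 0 := by
    rw [integral_const_mul, ← integral_indicator measurableSet_ball]
    set F := (ball (0 : Eu n) a).indicator (fun z => inner ℝ l z * mfun n f (‖z‖ ^ 2)) with hF
    have : ∫ z, F z = - ∫ z, F z := by
      rw [← integral_neg]
      refine (integral_neg_eq_self F volume).symm.trans ?_
      congr 1
      ext z
      simp only [hF, indicator, mem_ball_zero_iff, norm_neg, inner_neg_right]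
      split_ifs <;> simp
    have : ∫ z, F z = 0 := by linarith
    rw [this, mul_zero]
  have e3 : (∫ z in ball (0 : Eu n) a, v z * lapl (Bk f l) z) + sphereArea n * fderiv ℝ v 0 l =
      ∫ z in ball (0 : Eu n) a, (v z - v 0 - inner ℝ g z) * (inner ℝ l z * mfun n f (‖z‖ ^ 2)) := by
    have h : ∀ z : Eu n, (v z - v 0 - inner ℝ g z) * (inner ℝ l z * mfun n f (‖z‖ ^ 2)) =
      v z * (inner ℝ l z * mfun n f (‖z‖ ^ 2)) - v 0 * (inner ℝ l z * mfun n f (‖z‖ ^ 2))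
        - inner ℝ g z * inner ℝ l z * mfun n f (‖z‖ ^ 2) := fun z => by ring
    simp_rw [h, lapl_Bk f hfc]
    rw [integral_sub (hIntg _ (by fun_prop)) (hIntg _ (by fun_prop)),
      integral_sub (hIntg _ (by fun_prop)) (hIntg _ (by fun_prop)), e1, e2, hgi]
    ring
  rw [e3, ← Real.norm_eq_abs]
  have hvol : (volume : Measure (Eu n)).real (ball 0 a) = a ^ n * (volume : Measure (Eu n)).real (ball 0 1) := by
    have : Nonempty (Fin n) := ⟨⟨0, by omega⟩⟩
    have := congrArg ENNReal.toReal (Measure.addHaar_ball (volume : Measure (Eu n)) (0 : Eu n) ha.le)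
    rw [ENNReal.toReal_mul, ENNReal.toReal_ofReal (by positivity)] at this
    simpa [Measure.real] using this
  have hb := norm_setIntegral_le_of_norm_le_const (μ := (volume : Measure (Eu n))) (s := ball 0 a)
    (f := fun z => (v z - v 0 - inner ℝ g z) * (inner ℝ l z * mfun n f (‖z‖ ^ 2)))
    (C := ε * a * (a * (K * (a ^ (n + 2))⁻¹))) measure_ball_lt_top (fun z hz => by
      have hz' : ‖z‖ < a := by simpa using hz
      have p1 := abs_real_inner_le_norm l z
      rw [hl, one_mul] at p1
      have q1 := hd z hz
      have q2 := hf.2.2.2.2.2.2 ‖z‖ (norm_nonneg z) hz'.le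
      rw [norm_mul, norm_mul, hgi]
      simp only [Real.norm_eq_abs]
      have q3 : |v z - v 0 - fderiv ℝ v 0 z| ≤ ε * a := q1.trans (by gcongr)
      have q4 : |inner ℝ l z| ≤ a := p1.trans hz'.le
      gcongr)
  refine hb.trans (le_of_eq ?_)
  rw [hvol]
  field_simp
  try ring

lemma Cconst_nonneg {n : ℕ} (hn : 2 ≤ n) : 0 ≤ Cconst n := by
  have := (sphereArea_pos (show 1 ≤ n - 1 by omega)).le
  have := (sphereArea_pos (show 1 ≤ n by omega)).le
  have hn' : (1 : ℝ) ≤ n := by exact_mod_cast (show 1 ≤ n by omega)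
  have : 0 ≤ ((n : ℝ) - 1) ^ (((n : ℝ) - 1) / 2) := Real.rpow_nonneg (by linarith) _
  unfold Cconst
  positivity

theorem core {n : ℕ} (hn : 2 ≤ n) : ∃ C' : ℝ, 0 ≤ C' ∧ ∀ L : ℝ, 1 ≤ L → ∀ l ν : Eu n, ‖l‖ = 1 → ‖ν‖ = 1 →
    ∀ v : Eu n → ℝ, ContDiff ℝ 2 v → (∀ z, |v z| ≤ 1) → (∀ z ∈ Kreg L ν, lapl v z = 0) →
    sphereArea n * |fderiv ℝ v 0 l| ≤ Cconst n * sphereArea n + C' / L := by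
  obtain ⟨C, K, hC, hK, hp⟩ := prof_exists n
  have hω := sphereArea_pos (show 1 ≤ n by omega)
  have hG : 0 ≤ ∫ z : Eu n, Gm z := integral_nonneg Gm_nonneg
  refine ⟨C * (sphereArea n + 2 * ∫ z : Eu n, Gm z), by positivity, ?_⟩
  intro L hL l ν hl hν v hv hv1 hlap
  have hCL : 0 ≤ C / L := by positivity
  set V := K * (volume : Measure (Eu n)).real (ball 0 1) with hV
  have hV0 : 0 ≤ V := by positivity
  have hQ : 0 ≤ Cconst n * sphereArea n + C / L * sphereArea n := by
    have := Cconst_nonneg hn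
    positivity
  refine le_of_forall_pos_le_add fun ε hε => ?_
  have hε' : 0 < ε / (V + 1) := by positivity
  have hd := (hv.differentiable (by norm_num) 0).hasFDerivAt
  have hd' := (hasFDerivAt_iff_isLittleO.1 hd).def hε'
  obtain ⟨δ, hδ, hball⟩ := Metric.eventually_nhds_iff_ball.1 hd'
  set a := min δ (1 / 2) with ha
  have ha0 : 0 < a := by positivity
  have ha2 : a ≤ 1 / 2 := min_le_right _ _
  obtain ⟨f, hf⟩ := hp L hL a ha0 ha2
  have h1 := core2 hn f C K L a ha0 ha2 hCL hf l ν hl hν v hv hv1 hlap hQ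
  have h2 := near_bound hn f C K L a ha0 hK hf l hl v hv (ε / (V + 1)) hε'.le (fun z hz => by
    have := hball z (ball_subset_ball (min_le_left _ _) hz)
    simpa using this)
  have h3 : ε / (V + 1) * V ≤ ε := by
    rw [div_mul_eq_mul_div, div_le_iff₀ (by positivity)]
    nlinarith
  rw [← abs_of_pos hω, ← abs_mul]
  rw [abs_of_pos hω]
  have h4 := abs_sub ((∫ z in ball (0 : Eu n) a, v z * lapl (Bk f l) z) + sphereArea n * fderiv ℝ v 0 l)
    (∫ z in ball (0 : Eu n) a, v z * lapl (Bk f l) z)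
  rw [add_sub_cancel_left] at h4
  rw [mul_div_right_comm]
  linarith

end

section
open Set Topology
open scoped Manifold ContDiff

lemma cutoff {n : ℕ} (K U : Set (Eu n)) (hK : IsCompact K) (hU : IsOpen U) (hKU : K ⊆ U) :
    ∃ χ : Eu n → ℝ, ContDiff ℝ 2 χ ∧ (∀ᶠ z in 𝓝ˢ K, χ z = 1) ∧ (∀ᶠ z in 𝓝ˢ Uᶜ, χ z = 0) ∧
      ∀ z, χ z ∈ Icc (0 : ℝ) 1 := by
  obtain ⟨χ, h0, h1, h2⟩ := exists_contMDiffMap_zero_one_nhds_of_isClosed 𝓘(ℝ, Eu n)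
    hU.isClosed_compl hK.isClosed (by
      rw [disjoint_comm, ← subset_compl_iff_disjoint_right, compl_compl]; exact hKU) (n := 2)
  exact ⟨χ, χ.contMDiff.contDiff, h1, h0, h2⟩

lemma hasFDerivAt_affine {n : ℕ} (g : Eu n → ℝ) (g' : Eu n →L[ℝ] ℝ) (x z : Eu n) (d : ℝ)
    (h : HasFDerivAt g g' (x + d • z)) : HasFDerivAt (fun z => g (x + d • z)) (d • g') z := by
  have h1 : HasFDerivAt (fun z : Eu n => x + d • z) (d • ContinuousLinearMap.id ℝ (Eu n)) z :=
    ((hasFDerivAt_id z).const_smul d).const_add x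
  have := HasFDerivAt.comp (g := g) (f := fun z : Eu n => x + d • z) z h h1
  refine this.congr_fderiv ?_
  ext w
  simp

lemma fderiv_c1 {n : ℕ} (w : Eu n → ℝ) (Ω : Set (Eu n)) (hΩ : IsOpen Ω) (hw : ContDiffOn ℝ 2 w Ω) (e : Eu n)
    (y : Eu n) (hy : y ∈ Ω) : DifferentiableAt ℝ (fun y => fderiv ℝ w y e) y := by
  have h1 : ContDiffAt ℝ 2 w y := hw.contDiffAt (hΩ.mem_nhds hy)
  have h2 : ContDiffAt ℝ 1 (fderiv ℝ w) y := h1.fderiv_right (by norm_num)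
  exact (h2.clm_apply contDiffAt_const).differentiableAt (by norm_num)

lemma lapl_affine {n : ℕ} (w : Eu n → ℝ) (Ω : Set (Eu n)) (hΩ : IsOpen Ω) (hw : ContDiffOn ℝ 2 w Ω)
    (x z : Eu n) (d : ℝ) (hz : x + d • z ∈ Ω) :
    lapl (fun z => w (x + d • z)) z = d ^ 2 * lapl w (x + d • z) := by
  unfold lapl
  rw [Finset.mul_sum]
  refine Finset.sum_congr rfl fun i _ => ?_
  set e : Eu n := EuclideanSpace.single i 1
  have ho : IsOpen {z : Eu n | x + d • z ∈ Ω} := hΩ.preimage (by fun_prop)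
  have h1 : (fun y => fderiv ℝ (fun z => w (x + d • z)) y e) =ᶠ[𝓝 z]
      fun y => d * (fun y => fderiv ℝ w y e) (x + d • y) := by
    filter_upwards [ho.mem_nhds hz] with y hy
    have hd : DifferentiableAt ℝ w (x + d • y) := (hw.contDiffAt (hΩ.mem_nhds hy)).differentiableAt (by norm_num)
    rw [(hasFDerivAt_affine w _ x y d hd.hasFDerivAt).fderiv]
    simp
  rw [h1.fderiv_eq]
  have h2 := hasFDerivAt_affine (fun y => fderiv ℝ w y e) _ x z d (fderiv_c1 w Ω hΩ hw e _ hz).hasFDerivAt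
  rw [(h2.const_mul d).fderiv]
  simp
  ring

lemma lapl_sum {n m : ℕ} (u : Eu n → Eu m) (Ω : Set (Eu n)) (hΩ : IsOpen Ω)
    (hu : ∀ j : Fin m, IsHarmonicOn (fun y => u y j) Ω) (b : Eu m) (x : Eu n) (hx : x ∈ Ω) :
    lapl (fun y => ∑ j, b j * u y j) x = 0 := by
  have h : lapl (fun y => ∑ j, b j * u y j) x = ∑ j, b j * lapl (fun y => u y j) x := by
    unfold lapl
    simp_rw [Finset.mul_sum]
    rw [Finset.sum_comm]
    refine Finset.sum_congr rfl fun i _ => ?_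
    set e : Eu n := EuclideanSpace.single i 1
    have h1 : (fun y => fderiv ℝ (fun y => ∑ j, b j * u y j) y e) =ᶠ[𝓝 x]
        fun y => ∑ j, b j * fderiv ℝ (fun y => u y j) y e := by
      filter_upwards [hΩ.mem_nhds hx] with y hy
      have hd : ∀ j, HasFDerivAt (fun y => b j * u y j) (b j • fderiv ℝ (fun y => u y j) y) y := fun j =>
        ((((hu j).1.contDiffAt (hΩ.mem_nhds hy)).differentiableAt (by norm_num)).hasFDerivAt).const_mul (b j)
      rw [(HasFDerivAt.fun_sum fun j _ => hd j).fderiv]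
      simp
    rw [h1.fderiv_eq]
    have hd : ∀ j, HasFDerivAt (fun y => b j * fderiv ℝ (fun y => u y j) y e)
        (b j • fderiv ℝ (fun y => fderiv ℝ (fun y => u y j) y e) x) x := fun j =>
      ((fderiv_c1 _ Ω hΩ (hu j).1 e x hx).hasFDerivAt).const_mul (b j)
    rw [(HasFDerivAt.fun_sum fun j _ => hd j).fderiv]
    simp
  rw [h]
  exact Finset.sum_eq_zero fun j _ => by
    have : lapl (fun y => u y j) x = 0 := (hu j).2 x hx
    rw [this, mul_zero]

lemma reduce {n m : ℕ} (hn : 2 ≤ n) (C' L : ℝ) (ν l : Eu n)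
    (hcore : ∀ v : Eu n → ℝ, ContDiff ℝ 2 v → (∀ z, |v z| ≤ 1) → (∀ z ∈ Kreg L ν, lapl v z = 0) →
      sphereArea n * |fderiv ℝ v 0 l| ≤ Cconst n * sphereArea n + C' / L)
    (hC : 0 ≤ Cconst n * sphereArea n + C' / L)
    (Ω : Set (Eu n)) (hΩ : IsOpen Ω) (u : Eu n → Eu m)
    (hu : ∀ j : Fin m, IsHarmonicOn (fun y => u y j) Ω) (hu1 : ∀ y ∈ Ω, ‖u y‖ ≤ 1)
    (x : Eu n) (d : ℝ) (hd : 0 ≤ d) (hx : ∀ z ∈ Kreg L ν, x + d • z ∈ Ω) :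
    sphereArea n * (d * ‖fderiv ℝ u x l‖) ≤ Cconst n * sphereArea n + C' / L := by
  set W := fderiv ℝ u x l with hW
  by_cases hW0 : W = 0
  · simpa [hW0] using hC
  have hWn : 0 < ‖W‖ := norm_pos_iff.2 hW0
  set b : Eu m := (‖W‖)⁻¹ • W with hb
  have hb1 : ‖b‖ = 1 := by
    rw [hb, norm_smul, norm_inv, norm_norm, inv_mul_cancel₀ hWn.ne']
  have h0K : (0 : Eu n) ∈ Kreg L ν := by
    simp [Kreg]; positivity
  have hxΩ : x ∈ Ω := by simpa using hx 0 h0K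
  set w : Eu n → ℝ := fun y => ∑ j, b j * u y j with hw
  have hwi : ∀ y, w y = inner ℝ b (u y) := fun y => by
    simp [hw, PiLp.inner_apply, mul_comm]
  have hwc : ContDiffOn ℝ 2 w Ω := ContDiffOn.sum fun j _ => contDiffOn_const.mul (hu j).1
  have huc : ContDiffOn ℝ 2 u Ω := contDiffOn_euclidean.2 fun j => (hu j).1
  set U : Set (Eu n) := {z | x + d • z ∈ Ω} with hU
  have hUo : IsOpen U := hΩ.preimage (by fun_prop)
  obtain ⟨χ, hχ, hχ1, hχ0, hχr⟩ := cutoff (Kreg L ν) U (Kreg_compact L ν) hUo hx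
  set h : Eu n → ℝ := fun z => w (x + d • z) with hh
  have hhc : ∀ z ∈ U, ContDiffAt ℝ 2 h z := by
    intro z hz
    have h1 : ContDiffAt ℝ 2 w (x + d • z) := hwc.contDiffAt (hΩ.mem_nhds hz)
    exact ContDiffAt.comp (g := w) (f := fun z : Eu n => x + d • z) z h1
      (contDiffAt_const.add (contDiffAt_id.const_smul d))
  have hloc : ∀ z ∈ Kreg L ν, (fun z => χ z * h z) =ᶠ[𝓝 z] h := by
    intro z hz
    filter_upwards [eventually_nhdsSet_iff_forall.1 hχ1 z hz] with y hy
    rw [hy, one_mul]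
  have key := hcore (fun z => χ z * h z) ?_ ?_ ?_
  · rw [(hloc 0 h0K).fderiv_eq] at key
    have hud : HasFDerivAt u (fderiv ℝ u x) x :=
      ((huc.contDiffAt (hΩ.mem_nhds hxΩ)).differentiableAt (by norm_num)).hasFDerivAt
    have hwd : HasFDerivAt w ((innerSL ℝ b).comp (fderiv ℝ u x)) x := by
      have e : w = fun y => innerSL ℝ b (u y) := by
        ext y; rw [hwi]; rfl
      rw [e]
      exact (innerSL ℝ b).hasFDerivAt.comp x hud
    have hhd := hasFDerivAt_affine w _ x 0 d (by simpa using hwd)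
    rw [hhd.fderiv] at key
    have e2 : (d • ((innerSL ℝ b).comp (fderiv ℝ u x))) l = d * ‖W‖ := by
      simp only [smul_apply, ContinuousLinearMap.comp_apply, innerSL_apply_apply, smul_eq_mul]
      rw [← hW, hb, inner_smul_left, real_inner_self_eq_norm_sq]
      simp
      left
      field_simp
    rw [e2, abs_of_nonneg (by positivity)] at key
    exact key
  · rw [contDiff_iff_contDiffAt]
    intro z
    by_cases hz : z ∈ U
    · exact hχ.contDiffAt.mul (hhc z hz)
    · have : (fun z => χ z * h z) =ᶠ[𝓝 z] fun _ => 0 := by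
        filter_upwards [eventually_nhdsSet_iff_forall.1 hχ0 z hz] with y hy
        rw [hy, zero_mul]
      exact contDiffAt_const.congr_of_eventuallyEq this
  · intro z
    by_cases hz : z ∈ U
    · rw [abs_mul, abs_of_nonneg (hχr z).1]
      refine mul_le_one₀ (hχr z).2 (abs_nonneg _) ?_
      simp only [hh]
      rw [hwi]
      refine (abs_real_inner_le_norm _ _).trans ?_
      rw [hb1, one_mul]
      exact hu1 _ hz
    · have := (eventually_nhdsSet_iff_forall.1 hχ0 z hz).self_of_nhds
      simp [this]
  · intro z hz
    have e1 : lapl (fun z => χ z * h z) z = lapl h z := by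
      unfold lapl
      refine Finset.sum_congr rfl fun i _ => ?_
      have : (fun y => fderiv ℝ (fun z => χ z * h z) y (EuclideanSpace.single i 1)) =ᶠ[𝓝 z]
          fun y => fderiv ℝ h y (EuclideanSpace.single i 1) := by
        filter_upwards [(hloc z hz).eventuallyEq_nhds] with y hy
        rw [hy.fderiv_eq]
      rw [this.fderiv_eq]
    rw [e1, hh, lapl_affine w Ω hΩ hwc x z d (hx z hz), lapl_sum u Ω hΩ hu b _ (hx z hz), mul_zero]

end

section
open Set Topology

theorem main_aux
    (n m : ℕ) (hn : 2 ≤ n)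
    (Ω : Set (Eu n)) (hΩo : IsOpen Ω)
    (c ξ : Eu n) (R : ℝ) (hR : 0 < R)
    (hball : Metric.ball c R ⊆ Ω) (hξs : ξ ∈ Metric.sphere c R)
    (ε : ℝ) (hε : 0 < ε) :
    ∃ δ > 0, ∀ t : ℝ, 1 - δ < t → t < 1 →
      ∀ u : Eu n → Eu m, (∀ j : Fin m, IsHarmonicOn (fun y => u y j) Ω) →
        (∀ y ∈ Ω, ‖u y‖ ≤ 1) →
        ∀ ℓ : Eu n, ‖ℓ‖ = 1 →
          dist (c + t • (ξ - c)) ξ * ‖fderiv ℝ u (c + t • (ξ - c)) ℓ‖ ≤ Cconst n + ε := by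
  obtain ⟨C', hC', hcore⟩ := core hn
  have hω := sphereArea_pos (show 1 ≤ n by omega)
  have hCn := Cconst_nonneg hn
  have hξR : ‖ξ - c‖ = R := by simpa [dist_eq_norm] using hξs
  set ν : Eu n := R⁻¹ • (ξ - c) with hνd
  have hν : ‖ν‖ = 1 := by rw [hνd, norm_smul, hξR, norm_inv, Real.norm_of_nonneg hR.le, inv_mul_cancel₀ hR.ne']
  have hξν : ξ - c = R • ν := by rw [hνd, smul_smul, mul_inv_cancel₀ hR.ne', one_smul]
  clear_value ν
  set L : ℝ := 1 + 2 * C' / (sphereArea n * ε) with hL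
  have hL1 : 1 ≤ L := by
    have : 0 ≤ 2 * C' / (sphereArea n * ε) := by positivity
    linarith
  have hCL : C' / L ≤ sphereArea n * ε / 2 := by
    rw [div_le_iff₀ (by linarith), hL]
    have : sphereArea n * ε / 2 * (1 + 2 * C' / (sphereArea n * ε)) = sphereArea n * ε / 2 + C' := by
      field_simp
    rw [this]
    have : 0 ≤ sphereArea n * ε / 2 := by positivity
    linarith
  set M := Real.exp (L / 2) with hM
  have hM0 : 0 < M := Real.exp_pos _
  set η : ℝ := ε / (4 * (Cconst n + ε)) with hη
  have hη0 : 0 < η := by positivity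
  have hη1 : η ≤ 1 / 4 := by
    rw [hη, div_le_iff₀ (by positivity)]
    linarith
  have hηε : η * (Cconst n + ε) = ε / 4 := by rw [hη]; field_simp
  clear_value η
  refine ⟨min 1 (2 * η / (1 + M ^ 2)), by positivity, ?_⟩
  intro t ht1 ht u hu hu1 l hl
  have hδ1 := min_le_left (1 : ℝ) (2 * η / (1 + M ^ 2))
  have hδ2 := min_le_right (1 : ℝ) (2 * η / (1 + M ^ 2))
  have ht0 : 0 < t := by linarith
  have hτ : (1 - t) * (1 + M ^ 2) < 2 * η := by
    rw [← lt_div_iff₀ (by positivity)]; linarith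
  set x := c + t • (ξ - c) with hx
  set d0 := (1 - t) * R with hd0
  have hd00 : 0 < d0 := mul_pos (by linarith) hR
  have hdist : dist x ξ = d0 := by
    have : x - ξ = (t - 1) • (ξ - c) := by
      rw [hx, sub_smul, one_smul]; abel
    rw [dist_eq_norm, this, norm_smul, hξR, Real.norm_eq_abs, abs_of_neg (by linarith)]
    ring
  set d := (1 - η) * d0 with hd
  have hdp : 0 ≤ d := mul_nonneg (by linarith) hd00.le
  have hdle : d ≤ d0 := by nlinarith
  clear_value d d0 x
  have hin : ∀ z ∈ Kreg L ν, x + d • z ∈ Ω := by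
    intro z hz
    apply hball
    obtain ⟨hs, hz2⟩ := hz
    rw [mem_ball, dist_eq_norm]
    have e1 : x + d • z - c = (t * R) • ν + d • z := by
      rw [hx, hξν, smul_smul]; abel
    have e2 : ‖x + d • z - c‖ ^ 2 = (t * R) ^ 2 + 2 * (t * R * d) * inner ℝ ν z + d ^ 2 * ‖z‖ ^ 2 := by
      rw [e1, norm_add_sq_real, norm_smul, norm_smul, inner_smul_left, inner_smul_right, hν]
      simp only [Real.norm_eq_abs, mul_pow, sq_abs, conj_trivial]
      ring
    have p1 : 2 * (t * R * d) * inner ℝ ν z ≤ 2 * (t * R * d) * 1 := by gcongr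
    have p2 : d ^ 2 * ‖z‖ ^ 2 ≤ d0 ^ 2 * M ^ 2 := by gcongr
    have p3 : (t * R) ^ 2 + 2 * (t * R * d) * 1 ≤ (R - η * d0) ^ 2 := by
      have h1 : R - η * d0 = t * R + d := by rw [hd, hd0]; ring
      have h2 : (t * R + d) ^ 2 = (t * R) ^ 2 + 2 * (t * R * d) * 1 + d ^ 2 := by ring
      rw [h1, h2]
      exact le_add_of_nonneg_right (sq_nonneg d)
    have p4 : d0 * (1 + M ^ 2) < 2 * η * R := by
      have h1 := mul_lt_mul_of_pos_right hτ hR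
      have h2 : d0 * (1 + M ^ 2) = (1 - t) * (1 + M ^ 2) * R := by rw [hd0]; ring
      rw [h2]; exact h1
    have p5 : η ^ 2 * d0 ^ 2 ≤ d0 ^ 2 :=
      mul_le_of_le_one_left (sq_nonneg d0) (pow_le_one₀ hη0.le (by linarith))
    have p6 := mul_lt_mul_of_pos_left p4 hd00
    have p7 : d0 * (d0 * (1 + M ^ 2)) = d0 ^ 2 + d0 ^ 2 * M ^ 2 := by ring
    have p8 : (R - η * d0) ^ 2 = R ^ 2 - d0 * (2 * η * R) + η ^ 2 * d0 ^ 2 := by ring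
    have : ‖x + d • z - c‖ ^ 2 < R ^ 2 := by
      rw [e2]
      linarith
    exact lt_of_pow_lt_pow_left₀ 2 hR.le this
  have key := reduce hn C' L ν l (hcore L hL1 l ν hl hν) (by positivity) Ω hΩo u hu hu1 x d hdp hin
  rw [hdist]
  set B := ‖fderiv ℝ u x l‖ with hB
  have k1 : sphereArea n * (d * B) ≤ sphereArea n * (Cconst n + ε / 2) := by linarith
  have k2 : d * B ≤ Cconst n + ε / 2 := le_of_mul_le_mul_left k1 hω
  rw [hd] at k2
  have k3 : (1 - η) * (d0 * B) ≤ (1 - η) * (Cconst n + ε) := by nlinarith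
  exact le_of_mul_le_mul_left k3 (by linarith)

end

/-- Let `Ω ⊂ ℝⁿ` (`n ≥ 2`) be a domain and suppose `ξ ∈ ∂Ω` is touched
by an interior ball `B = ball c R ⊆ Ω`. Then, along the radius `x_t = c + t(ξ - c)`,
`limsup_{x→ξ} sup_{u ∈ 𝔘(Ω)} max_{|ℓ|=1} |x-ξ| |(ℓ,∇)u(x)| ≤ C_n`, where `𝔘(Ω)` is
the set of `m`-component vector fields with harmonic components and `sup_Ω |u| ≤ 1`:
for every `ε > 0` there is `δ > 0` such that for all `t ∈ (1-δ, 1)`, all such `u` and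
all unit vectors `ℓ`, `|x_t - ξ| |(ℓ,∇)u(x_t)| ≤ C_n + ε`. -/
theorem limsup_directional_derivative_interior_ball
    (n m : ℕ) (hn : 2 ≤ n) (hm : 1 ≤ m)
    (Ω : Set (Eu n)) (hΩo : IsOpen Ω) (hΩc : IsConnected Ω)
    (c ξ : Eu n) (R : ℝ) (hR : 0 < R)
    (hball : Metric.ball c R ⊆ Ω) (hξs : ξ ∈ Metric.sphere c R) (hξ : ξ ∈ frontier Ω)
    (ε : ℝ) (hε : 0 < ε) :
    ∃ δ > 0, ∀ t : ℝ, 1 - δ < t → t < 1 →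
      ∀ u : Eu n → Eu m, (∀ j : Fin m, IsHarmonicOn (fun y => u y j) Ω) →
        (∀ y ∈ Ω, ‖u y‖ ≤ 1) →
        ∀ ℓ : Eu n, ‖ℓ‖ = 1 →
          dist (c + t • (ξ - c)) ξ * ‖fderiv ℝ u (c + t • (ξ - c)) ℓ‖ ≤ Cconst n + ε := by
  exact main_aux n m hn Ω hΩo c ξ R hR hball hξs ε hε
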